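/- arXiv:math/0602607 — 4 statements merged into one kernel-verified Lean document; each statement's English description precedes it below -/
import Mathlib

section
/- Let a_r, a_t, φ, ψ : (0,∞)×ℝ → M_n(ℂ) be smooth anti-Hermitian-valued maps. Define fields on (ℝ²∖{0})×ℝ in polar coordinates x = r cosθ, y = r sinθ by A_x = cosθ·a_r(r,t) − sinθ·ψ(r,t), A_y = sinθ·a_r(r,t) + cosθ·ψ(r,t), A_t = a_t(r,t), Φ = φ(r,t) (i.e. a_r is the radial component and ψ the angular component per unit length of the spatial connection). Then (A,Φ) solves the space-time monopole equation on (ℝ²∖{0})×ℝ if and only if on (0,∞)×ℝ: (i) −∂_ta_r + ∂_ra_t + [a_t,a_r] = [φ,ψ]; (ii) ∂_tψ − [a_t,ψ] = ∂_rφ − [a_r,φ]; (iii) ∂_tφ − [a_t,φ] = ∂_rψ − [a_r,ψ] + ψ/r. -/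
open Matrix Complex
open scoped Matrix ComplexConjugate

attribute [local instance] Matrix.normedAddCommGroup Matrix.normedSpace

noncomputable section

/-- `n × n` complex matrices. -/
abbrev Mat (n : ℕ) := Matrix (Fin n) (Fin n) ℂ

/-- Space-time `ℝ³` with coordinates `(x, y, t)`. -/
abbrev P3 : Type := ℝ × ℝ × ℝ

section PartialDerivatives

variable {W : Type*} [NormedAddCommGroup W] [NormedSpace ℝ W]

/-- Partial derivative in `x`. -/
def pdx (f : P3 → W) (p : P3) : W := deriv (fun s => f (s, p.2.1, p.2.2)) p.1

/-- Partial derivative in `y`. -/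
def pdy (f : P3 → W) (p : P3) : W := deriv (fun s => f (p.1, s, p.2.2)) p.2.1

/-- Partial derivative in `t`. -/
def pdt (f : P3 → W) (p : P3) : W := deriv (fun s => f (p.1, p.2.1, s)) p.2.2

/-- Light-cone derivative `∂_ξ = ∂_t + ∂_x`. -/
def pdxi (f : P3 → W) (p : P3) : W := pdt f p + pdx f p

/-- Light-cone derivative `∂_η = ∂_t − ∂_x`. -/
def pdeta (f : P3 → W) (p : P3) : W := pdt f p - pdx f p

end PartialDerivatives

/-- `∂_z = ½(∂_x − i ∂_y)`. -/
def pdz {n : ℕ} (f : P3 → Mat n) (p : P3) : Mat n :=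
  (2⁻¹ : ℂ) • (pdx f p - Complex.I • pdy f p)

/-- `∂_z̄ = ½(∂_x + i ∂_y)`. -/
def pdzbar {n : ℕ} (f : P3 → Mat n) (p : P3) : Mat n :=
  (2⁻¹ : ℂ) • (pdx f p + Complex.I • pdy f p)

/-- Commutator `[X, Y] = XY − YX`. -/
def brk {n : ℕ} (X Y : Mat n) : Mat n := X * Y - Y * X

/-- Anti-Hermitian-valued map. -/
def SkewHerm {n : ℕ} (f : P3 → Mat n) : Prop := ∀ p : P3, (f p)ᴴ = -(f p)

/-- The space-time monopole equation `F_{xy} = −∇_tφ`, `F_{xt} = −∇_yφ`, `F_{yt} = ∇_xφ`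
for the connection `(Ax, Ay, At)` and Higgs field `Ph`, at the point `p`. -/
def MonopoleEqAt {n : ℕ} (Ax Ay At Ph : P3 → Mat n) (p : P3) : Prop :=
  (-(pdx Ay p) + pdy Ax p + brk (Ax p) (Ay p) = -(pdt Ph p - brk (At p) (Ph p))) ∧
  (-(pdx At p) + pdt Ax p + brk (Ax p) (At p) = -(pdy Ph p - brk (Ay p) (Ph p))) ∧
  (-(pdy At p) + pdt Ay p + brk (Ay p) (At p) = pdx Ph p - brk (Ax p) (Ph p))

/-- The space-time monopole equation on all of `ℝ³`. -/
def MonopoleEq {n : ℕ} (Ax Ay At Ph : P3 → Mat n) : Prop :=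
  ∀ p : P3, MonopoleEqAt Ax Ay At Ph p

/-- `E` solves the `μ`-linear system for `(A, φ)`. -/
def SolvesMu {n : ℕ} (Ax Ay At Ph : P3 → Mat n) (μ : ℂ) (E : P3 → Mat n) : Prop :=
  ∀ p : P3,
    (2⁻¹ : ℂ) • pdt E p + μ • pdz E p =
      ((2⁻¹ : ℂ) • (At p + Complex.I • Ph p) +
        μ • ((2⁻¹ : ℂ) • (Ax p - Complex.I • Ay p))) * E p ∧
    (2⁻¹ : ℂ) • pdt E p + μ⁻¹ • pdzbar E p =
      ((2⁻¹ : ℂ) • (At p - Complex.I • Ph p) +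
        μ⁻¹ • ((2⁻¹ : ℂ) • (Ax p + Complex.I • Ay p))) * E p

/-- `F` solves the `λ`-linear system for `(A, φ)`. -/
def SolvesLam {n : ℕ} (Ax Ay At Ph : P3 → Mat n) (lm : ℂ) (F : P3 → Mat n) : Prop :=
  ∀ p : P3,
    lm • pdxi F p - pdy F p = (lm • (At p + Ax p) - (Ay p + Ph p)) * F p ∧
    lm⁻¹ • pdeta F p - pdy F p = (lm⁻¹ • (At p - Ax p) - (Ay p - Ph p)) * F p

/-- Partial derivative in the first (radial) variable. -/
def pdr {n : ℕ} (f : ℝ × ℝ → Mat n) (q : ℝ × ℝ) : Mat n :=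
  deriv (fun s => f (s, q.2)) q.1

/-- Partial derivative in the second (time) variable. -/
def pdsnd {n : ℕ} (f : ℝ × ℝ → Mat n) (q : ℝ × ℝ) : Mat n :=
  deriv (fun s => f (q.1, s)) q.2

/-- The radius `r = √(x² + y²)`. -/
def rad (p : P3) : ℝ := Real.sqrt (p.1 ^ 2 + p.2.1 ^ 2)

/-- `A_x = cosθ·a_r − sinθ·ψ` in polar coordinates. -/
def polAx {n : ℕ} (ar ps : ℝ × ℝ → Mat n) (p : P3) : Mat n :=
  ((p.1 / rad p : ℝ) : ℂ) • ar (rad p, p.2.2) - ((p.2.1 / rad p : ℝ) : ℂ) • ps (rad p, p.2.2)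

/-- `A_y = sinθ·a_r + cosθ·ψ` in polar coordinates. -/
def polAy {n : ℕ} (ar ps : ℝ × ℝ → Mat n) (p : P3) : Mat n :=
  ((p.2.1 / rad p : ℝ) : ℂ) • ar (rad p, p.2.2) + ((p.1 / rad p : ℝ) : ℂ) • ps (rad p, p.2.2)

/-- A rotationally invariant field, e.g. `A_t = a_t(r,t)` or `Φ = φ(r,t)`. -/
def polRad {n : ℕ} (f : ℝ × ℝ → Mat n) (p : P3) : Mat n := f (rad p, p.2.2)

/-!
Work in the moving coframe `dr`, `dθ`, `dt`. Since `d(cos θ) = -sin θ dθ` and `d(sin θ) = cos θ dθ`,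
differentiating the rotated pair `(A_x, A_y)` gives the rotated pair of differentials plus
`(-A_y, A_x) dθ`; the last term produces the `ψ / r` in `F_xy`. The remaining components
`(F_xt, F_yt)` and `(∇_xΦ, ∇_yΦ)` are rotations by `θ` of `(F_rt, F_θt)` and `(∇_rΦ, ∇_θΦ)`, and
the rotation cancels from the pair of equations `F_xt = -∇_yΦ`, `F_yt = ∇_xΦ`.
-/

theorem hasDerivAt_comp_prodMk_left {𝕜 E W : Type*} [NontriviallyNormedField 𝕜]
    [NormedAddCommGroup E] [NormedSpace 𝕜 E] [NormedAddCommGroup W] [NormedSpace 𝕜 W]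
    {f : 𝕜 × E → W} {f' : 𝕜 × E →L[𝕜] W} {q : 𝕜 × E} (hf : HasFDerivAt f f' q) :
    HasDerivAt (fun s => f (s, q.2)) (f' (1, 0)) q.1 :=
  HasFDerivAt.comp_hasDerivAt (f := fun s => (s, q.2)) q.1 hf
    ((hasDerivAt_id q.1).prodMk (hasDerivAt_const q.1 q.2))

section PartialDerivativesOfDifferentiable

variable {W : Type*} [NormedAddCommGroup W] [NormedSpace ℝ W]
  {f : P3 → W} {f' : P3 →L[ℝ] W} {p : P3}

theorem pdx_eq_of_hasFDerivAt (hf : HasFDerivAt f f' p) : pdx f p = f' (1, 0, 0) :=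
  (hasDerivAt_comp_prodMk_left hf).deriv

theorem pdy_eq_of_hasFDerivAt (hf : HasFDerivAt f f' p) : pdy f p = f' (0, 1, 0) :=
  (HasFDerivAt.comp_hasDerivAt (f := fun s => (p.1, s, p.2.2)) p.2.1 hf
    ((hasDerivAt_const p.2.1 p.1).prodMk
      ((hasDerivAt_id p.2.1).prodMk (hasDerivAt_const p.2.1 p.2.2)))).deriv

theorem hasDerivAt_pdt (hf : DifferentiableAt ℝ f p) :
    HasDerivAt (fun s => f (p.1, p.2.1, s)) (pdt f p) p.2.2 :=
  (DifferentiableAt.comp (f := fun s => (p.1, p.2.1, s)) p.2.2 hf (by fun_prop)).hasDerivAt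

end PartialDerivativesOfDifferentiable

theorem hasFDerivAt_div {𝕜 E : Type*} [NontriviallyNormedField 𝕜] [NormedAddCommGroup E]
    [NormedSpace 𝕜 E] {u v : E → 𝕜} {u' v' : E →L[𝕜] 𝕜} {x : E} (hu : HasFDerivAt u u' x)
    (hv : HasFDerivAt v v' x) (hx : v x ≠ 0) :
    HasFDerivAt (fun z => u z / v z) ((v x)⁻¹ • (u' - (u x / v x) • v')) x := by
  have hinv : HasFDerivAt (fun z => (v z)⁻¹) (-(v x ^ 2)⁻¹ • v') x :=
    (hasDerivAt_inv hx).comp_hasFDerivAt x hv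
  simp only [div_eq_mul_inv]
  refine (hu.mul hinv).congr_fderiv ?_
  match_scalars <;> field_simp

section PolarCoframe

/-- `cos θ = x / r`, with value `0` on the axis `r = 0`. -/
def polCos (p : P3) : ℝ := p.1 / rad p

/-- `sin θ = y / r`, with value `0` on the axis `r = 0`. -/
def polSin (p : P3) : ℝ := p.2.1 / rad p

/-- The coordinate differential `dx` on space-time. -/
def formX : P3 →L[ℝ] ℝ := ContinuousLinearMap.fst ℝ ℝ (ℝ × ℝ)

/-- The coordinate differential `dy` on space-time. -/
def formY : P3 →L[ℝ] ℝ :=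
  (ContinuousLinearMap.fst ℝ ℝ ℝ).comp (ContinuousLinearMap.snd ℝ ℝ (ℝ × ℝ))

/-- The coordinate differential `dt` on space-time. -/
def formT : P3 →L[ℝ] ℝ :=
  (ContinuousLinearMap.snd ℝ ℝ ℝ).comp (ContinuousLinearMap.snd ℝ ℝ (ℝ × ℝ))

/-- The differential `dr = cos θ dx + sin θ dy` at `p`. -/
def formR (p : P3) : P3 →L[ℝ] ℝ := polCos p • formX + polSin p • formY

/-- The differential `dθ = r⁻¹ (cos θ dy - sin θ dx)` at `p`, which needs no choice of angle. -/
def formTheta (p : P3) : P3 →L[ℝ] ℝ := (rad p)⁻¹ • (polCos p • formY - polSin p • formX)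

@[simp] theorem formT_apply (v : P3) : formT v = v.2.2 := rfl

@[simp] theorem formR_apply (p v : P3) : formR p v = polCos p * v.1 + polSin p * v.2.1 := rfl

theorem formTheta_apply (p v : P3) :
    formTheta p v = (rad p)⁻¹ * (polCos p * v.2.1 - polSin p * v.1) := rfl

theorem rad_pos_iff {p : P3} : 0 < rad p ↔ ¬(p.1 = 0 ∧ p.2.1 = 0) := by
  rw [rad, Real.sqrt_pos, lt_iff_le_and_ne, and_iff_right (by positivity), ne_comm, ne_eq,
    add_eq_zero_iff_of_nonneg (sq_nonneg _) (sq_nonneg _), sq_eq_zero_iff, sq_eq_zero_iff]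

theorem rad_of_y_eq_zero {r : ℝ} (hr : 0 ≤ r) (t : ℝ) : rad (r, 0, t) = r := by
  simp [rad, Real.sqrt_sq hr]

theorem polCos_sq_add_polSin_sq {p : P3} (hp : 0 < rad p) : polCos p ^ 2 + polSin p ^ 2 = 1 := by
  have hsq : rad p ^ 2 = p.1 ^ 2 + p.2.1 ^ 2 := Real.sq_sqrt (by positivity)
  rw [polCos, polSin, div_pow, div_pow, ← add_div, ← hsq, div_self (pow_pos hp 2).ne']

theorem hasFDerivAt_rad {p : P3} (hp : 0 < rad p) : HasFDerivAt rad (formR p) p := by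
  have hsq : p.1 ^ 2 + p.2.1 ^ 2 ≠ 0 := (Real.sqrt_pos.1 hp).ne'
  have hx : HasFDerivAt (fun q : P3 => q.1) formX p := formX.hasFDerivAt
  have hy : HasFDerivAt (fun q : P3 => q.2.1) formY p := formY.hasFDerivAt
  refine (((hx.pow 2).add (hy.pow 2)).sqrt hsq).congr_fderiv ?_
  change (1 / (2 * rad p)) • _ = (p.1 / rad p) • formX + (p.2.1 / rad p) • formY
  match_scalars <;> field_simp <;> simp

theorem hasFDerivAt_polCos {p : P3} (hp : 0 < rad p) :
    HasFDerivAt polCos (-polSin p • formTheta p) p := by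
  refine (hasFDerivAt_div formX.hasFDerivAt (hasFDerivAt_rad hp) hp.ne').congr_fderiv ?_
  change (rad p)⁻¹ • (formX - polCos p • formR p) = _
  rw [formR, formTheta]
  linear_combination (norm := module) (-(rad p)⁻¹ * polCos_sq_add_polSin_sq hp) • formX

theorem hasFDerivAt_polSin {p : P3} (hp : 0 < rad p) :
    HasFDerivAt polSin (polCos p • formTheta p) p := by
  refine (hasFDerivAt_div formY.hasFDerivAt (hasFDerivAt_rad hp) hp.ne').congr_fderiv ?_
  change (rad p)⁻¹ • (formY - polSin p • formR p) = _
  rw [formR, formTheta]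
  linear_combination (norm := module) (-(rad p)⁻¹ * polCos_sq_add_polSin_sq hp) • formY

end PolarCoframe

section PolarPartialDerivatives

variable {W : Type*} [NormedAddCommGroup W] [NormedSpace ℝ W] {p : P3}

theorem hasFDerivAt_comp_rad {f : ℝ × ℝ → W} {f' : ℝ × ℝ →L[ℝ] W} (hp : 0 < rad p)
    (hf : HasFDerivAt f f' (rad p, p.2.2)) :
    HasFDerivAt (fun q : P3 => f (rad q, q.2.2)) (f'.comp ((formR p).prod formT)) p :=
  HasFDerivAt.comp (f := fun q : P3 => (rad q, q.2.2)) p hf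
    ((hasFDerivAt_rad hp).prodMk formT.hasFDerivAt)

theorem pdx_comp_rad {f : ℝ × ℝ → W} (hp : 0 < rad p)
    (hf : DifferentiableAt ℝ f (rad p, p.2.2)) :
    pdx (fun q => f (rad q, q.2.2)) p = polCos p • deriv (fun s => f (s, p.2.2)) (rad p) := by
  rw [pdx_eq_of_hasFDerivAt (hasFDerivAt_comp_rad hp hf.hasFDerivAt),
    (hasDerivAt_comp_prodMk_left hf.hasFDerivAt).deriv, ← map_smul]
  simp

theorem pdy_comp_rad {f : ℝ × ℝ → W} (hp : 0 < rad p)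
    (hf : DifferentiableAt ℝ f (rad p, p.2.2)) :
    pdy (fun q => f (rad q, q.2.2)) p = polSin p • deriv (fun s => f (s, p.2.2)) (rad p) := by
  rw [pdy_eq_of_hasFDerivAt (hasFDerivAt_comp_rad hp hf.hasFDerivAt),
    (hasDerivAt_comp_prodMk_left hf.hasFDerivAt).deriv, ← map_smul]
  simp

variable {F G : P3 → W} {F' G' : P3 →L[ℝ] W}

theorem hasFDerivAt_rotation_fst (hp : 0 < rad p) (hF : HasFDerivAt F F' p)
    (hG : HasFDerivAt G G' p) :
    HasFDerivAt (polCos • F - polSin • G)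
      (polCos p • F' - polSin p • G' -
        (formTheta p).smulRight (polSin p • F p + polCos p • G p)) p := by
  refine (((hasFDerivAt_polCos hp).smul hF).sub
    ((hasFDerivAt_polSin hp).smul hG)).congr_fderiv (ContinuousLinearMap.ext fun v => ?_)
  simp only [_root_.add_apply, _root_.sub_apply, _root_.smul_apply,
    ContinuousLinearMap.smulRight_apply]
  module

theorem hasFDerivAt_rotation_snd (hp : 0 < rad p) (hF : HasFDerivAt F F' p)
    (hG : HasFDerivAt G G' p) :
    HasFDerivAt (polSin • F + polCos • G)
      (polSin p • F' + polCos p • G' +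
        (formTheta p).smulRight (polCos p • F p - polSin p • G p)) p := by
  refine (((hasFDerivAt_polSin hp).smul hF).add
    ((hasFDerivAt_polCos hp).smul hG)).congr_fderiv (ContinuousLinearMap.ext fun v => ?_)
  simp only [_root_.add_apply, _root_.smul_apply, ContinuousLinearMap.smulRight_apply]
  module

theorem pdt_rotation_fst (hF : DifferentiableAt ℝ F p) (hG : DifferentiableAt ℝ G p) :
    pdt (polCos • F - polSin • G) p = polCos p • pdt F p - polSin p • pdt G p :=
  (((hasDerivAt_pdt hF).const_smul (polCos p)).sub
    ((hasDerivAt_pdt hG).const_smul (polSin p))).deriv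

theorem pdt_rotation_snd (hF : DifferentiableAt ℝ F p) (hG : DifferentiableAt ℝ G p) :
    pdt (polSin • F + polCos • G) p = polSin p • pdt F p + polCos p • pdt G p :=
  (((hasDerivAt_pdt hF).const_smul (polSin p)).add
    ((hasDerivAt_pdt hG).const_smul (polCos p))).deriv

theorem pdx_rotation_snd_sub_pdy_rotation_fst (hp : 0 < rad p) (hF : DifferentiableAt ℝ F p)
    (hG : DifferentiableAt ℝ G p) :
    pdx (polSin • F + polCos • G) p - pdy (polCos • F - polSin • G) p =
      (polSin p • pdx F p - polCos p • pdy F p) + (polCos p • pdx G p + polSin p • pdy G p) +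
        (rad p)⁻¹ • G p := by
  rw [pdx_eq_of_hasFDerivAt (hasFDerivAt_rotation_snd hp hF.hasFDerivAt hG.hasFDerivAt),
    pdy_eq_of_hasFDerivAt (hasFDerivAt_rotation_fst hp hF.hasFDerivAt hG.hasFDerivAt),
    pdx_eq_of_hasFDerivAt hF.hasFDerivAt, pdx_eq_of_hasFDerivAt hG.hasFDerivAt,
    pdy_eq_of_hasFDerivAt hF.hasFDerivAt, pdy_eq_of_hasFDerivAt hG.hasFDerivAt]
  simp only [_root_.add_apply, _root_.sub_apply, _root_.smul_apply,
    ContinuousLinearMap.smulRight_apply, formTheta_apply]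
  linear_combination (norm := module) ((rad p)⁻¹ * polCos_sq_add_polSin_sq hp) • G p

end PolarPartialDerivatives

section Commutator

variable {n : ℕ}

theorem brk_comm (X Y : Mat n) : brk X Y = -brk Y X := (neg_sub _ _).symm

theorem brk_smul_sub_smul (a b : ℝ) (X Y Z : Mat n) :
    brk (a • X - b • Y) Z = a • brk X Z - b • brk Y Z := by
  simp only [brk, sub_mul, mul_sub, smul_mul_assoc, mul_smul_comm]
  module

theorem brk_smul_add_smul (a b : ℝ) (X Y Z : Mat n) :
    brk (a • X + b • Y) Z = a • brk X Z + b • brk Y Z := by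
  simp only [brk, add_mul, mul_add, smul_mul_assoc, mul_smul_comm]
  module

theorem brk_rotation {c s : ℝ} (hcs : c ^ 2 + s ^ 2 = 1) (X Y : Mat n) :
    brk (c • X - s • Y) (s • X + c • Y) = brk X Y := by
  simp only [brk, sub_mul, mul_sub, add_mul, mul_add, smul_mul_assoc, mul_smul_comm]
  linear_combination (norm := module) hcs • (X * Y - Y * X)

end Commutator

section PolarFields

variable {n : ℕ} {ar ps f : ℝ × ℝ → Mat n} {p : P3}

theorem polAx_eq_rotation (ar ps : ℝ × ℝ → Mat n) :
    polAx ar ps = polCos • polRad ar - polSin • polRad ps := by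
  funext p
  simp only [polAx, Complex.coe_smul]
  rfl

theorem polAy_eq_rotation (ar ps : ℝ × ℝ → Mat n) :
    polAy ar ps = polSin • polRad ar + polCos • polRad ps := by
  funext p
  simp only [polAy, Complex.coe_smul]
  rfl

theorem differentiableAt_polRad (hp : 0 < rad p) (hf : DifferentiableAt ℝ f (rad p, p.2.2)) :
    DifferentiableAt ℝ (polRad f) p :=
  (hasFDerivAt_comp_rad hp hf.hasFDerivAt).differentiableAt

theorem pdx_polRad (hp : 0 < rad p) (hf : DifferentiableAt ℝ f (rad p, p.2.2)) :
    pdx (polRad f) p = polCos p • pdr f (rad p, p.2.2) :=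
  pdx_comp_rad hp hf

theorem pdy_polRad (hp : 0 < rad p) (hf : DifferentiableAt ℝ f (rad p, p.2.2)) :
    pdy (polRad f) p = polSin p • pdr f (rad p, p.2.2) :=
  pdy_comp_rad hp hf

theorem pdt_polAx (hp : 0 < rad p) (har : DifferentiableAt ℝ ar (rad p, p.2.2))
    (hps : DifferentiableAt ℝ ps (rad p, p.2.2)) :
    pdt (polAx ar ps) p =
      polCos p • pdsnd ar (rad p, p.2.2) - polSin p • pdsnd ps (rad p, p.2.2) := by
  rw [polAx_eq_rotation]
  exact pdt_rotation_fst (differentiableAt_polRad hp har) (differentiableAt_polRad hp hps)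

theorem pdt_polAy (hp : 0 < rad p) (har : DifferentiableAt ℝ ar (rad p, p.2.2))
    (hps : DifferentiableAt ℝ ps (rad p, p.2.2)) :
    pdt (polAy ar ps) p =
      polSin p • pdsnd ar (rad p, p.2.2) + polCos p • pdsnd ps (rad p, p.2.2) := by
  rw [polAy_eq_rotation]
  exact pdt_rotation_snd (differentiableAt_polRad hp har) (differentiableAt_polRad hp hps)

theorem pdx_polAy_sub_pdy_polAx (hp : 0 < rad p) (har : DifferentiableAt ℝ ar (rad p, p.2.2))
    (hps : DifferentiableAt ℝ ps (rad p, p.2.2)) :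
    pdx (polAy ar ps) p - pdy (polAx ar ps) p =
      pdr ps (rad p, p.2.2) + (rad p)⁻¹ • ps (rad p, p.2.2) := by
  rw [polAx_eq_rotation, polAy_eq_rotation, pdx_rotation_snd_sub_pdy_rotation_fst hp
    (differentiableAt_polRad hp har) (differentiableAt_polRad hp hps), pdx_polRad hp har,
    pdy_polRad hp har, pdx_polRad hp hps, pdy_polRad hp hps, polRad]
  linear_combination (norm := module) polCos_sq_add_polSin_sq hp • pdr ps (rad p, p.2.2)

theorem brk_polAx (ar ps : ℝ × ℝ → Mat n) (p : P3) (X : Mat n) :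
    brk (polAx ar ps p) X =
      polCos p • brk (ar (rad p, p.2.2)) X - polSin p • brk (ps (rad p, p.2.2)) X := by
  rw [polAx_eq_rotation]
  exact brk_smul_sub_smul ..

theorem brk_polAy (ar ps : ℝ × ℝ → Mat n) (p : P3) (X : Mat n) :
    brk (polAy ar ps p) X =
      polSin p • brk (ar (rad p, p.2.2)) X + polCos p • brk (ps (rad p, p.2.2)) X := by
  rw [polAy_eq_rotation]
  exact brk_smul_add_smul ..

theorem brk_polAx_polAy (ar ps : ℝ × ℝ → Mat n) (hp : 0 < rad p) :
    brk (polAx ar ps p) (polAy ar ps p) = brk (ar (rad p, p.2.2)) (ps (rad p, p.2.2)) := by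
  rw [polAx_eq_rotation, polAy_eq_rotation]
  exact brk_rotation (polCos_sq_add_polSin_sq hp) ..

end PolarFields

theorem rotation_eq_neg_rotation_iff {R M : Type*} [CommRing R] [AddCommGroup M] [Module R M]
    {c s : R} (hcs : c ^ 2 + s ^ 2 = 1) {u v x y : M} :
    c • u - s • v = -(s • x + c • y) ∧ s • u + c • v = c • x - s • y ↔ u = -y ∧ v = x := by
  constructor
  · rintro ⟨hc, hs⟩
    constructor
    · linear_combination (norm := module) c • hc + s • hs - hcs • (u + y)
    · linear_combination (norm := module) c • hs - s • hc - hcs • (v - x)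
  · rintro ⟨rfl, rfl⟩
    constructor <;> module

section Reduction

variable {n : ℕ}

/-- The reduced system (i)–(iii) for the radial profiles `a_r`, `a_t`, `φ`, `ψ` at the point
`q = (r, t)`; the term `ψ / r` has the junk value `0` at `r = 0`. -/
def RadialMonopoleEqAt (ar at' ph ps : ℝ × ℝ → Mat n) (q : ℝ × ℝ) : Prop :=
  (-(pdsnd ar q) + pdr at' q + brk (at' q) (ar q) = brk (ph q) (ps q)) ∧
  (pdsnd ps q - brk (at' q) (ps q) = pdr ph q - brk (ar q) (ph q)) ∧
  (pdsnd ph q - brk (at' q) (ph q) =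
    pdr ps q - brk (ar q) (ps q) + ((q.1⁻¹ : ℝ) : ℂ) • ps q)

variable {ar at' ph ps : ℝ × ℝ → Mat n} {p : P3}

/-- In the frame `∂_r`, `r⁻¹ ∂_θ`, `∂_t` the equations read `F_rθ = -∇_tΦ`, `F_rt = -∇_θΦ` and
`F_θt = ∇_rΦ`, where `∇_θΦ = -[ψ, φ]` because `φ` does not depend on `θ`. -/
theorem radialMonopoleEqAt_iff_curvature {q : ℝ × ℝ} :
    RadialMonopoleEqAt ar at' ph ps q ↔
      (-(pdr ps q - brk (ar q) (ps q) + ((q.1⁻¹ : ℝ) : ℂ) • ps q) =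
        -(pdsnd ph q - brk (at' q) (ph q))) ∧
      (-(pdr at' q) + pdsnd ar q + brk (ar q) (at' q) = - -brk (ps q) (ph q)) ∧
      (pdsnd ps q + brk (ps q) (at' q) = pdr ph q - brk (ar q) (ph q)) := by
  rw [RadialMonopoleEqAt, brk_comm (at' q) (ar q), brk_comm (at' q) (ps q),
    brk_comm (ph q) (ps q), sub_neg_eq_add, neg_inj, neg_neg]
  constructor
  · rintro ⟨hrt, hθt, hrθ⟩
    exact ⟨hrθ.symm, by linear_combination (norm := module) -hrt, hθt⟩
  · rintro ⟨hrθ, hrt, hθt⟩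
    exact ⟨by linear_combination (norm := module) -hrt, hθt, hrθ.symm⟩

theorem polar_curvature_xy (hp : 0 < rad p) (har : DifferentiableAt ℝ ar (rad p, p.2.2))
    (hps : DifferentiableAt ℝ ps (rad p, p.2.2)) :
    -(pdx (polAy ar ps) p) + pdy (polAx ar ps) p + brk (polAx ar ps p) (polAy ar ps p) =
      -(pdr ps (rad p, p.2.2) - brk (ar (rad p, p.2.2)) (ps (rad p, p.2.2)) +
        (((rad p)⁻¹ : ℝ) : ℂ) • ps (rad p, p.2.2)) := by
  rw [brk_polAx_polAy ar ps hp, Complex.coe_smul]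
  linear_combination (norm := module) -pdx_polAy_sub_pdy_polAx hp har hps

theorem polar_curvature_xt (hp : 0 < rad p) (har : DifferentiableAt ℝ ar (rad p, p.2.2))
    (hat : DifferentiableAt ℝ at' (rad p, p.2.2)) (hps : DifferentiableAt ℝ ps (rad p, p.2.2)) :
    -(pdx (polRad at') p) + pdt (polAx ar ps) p + brk (polAx ar ps p) (polRad at' p) =
      polCos p • (-(pdr at' (rad p, p.2.2)) + pdsnd ar (rad p, p.2.2) +
          brk (ar (rad p, p.2.2)) (at' (rad p, p.2.2))) -
        polSin p • (pdsnd ps (rad p, p.2.2) + brk (ps (rad p, p.2.2)) (at' (rad p, p.2.2))) := by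
  rw [pdx_polRad hp hat, pdt_polAx hp har hps, brk_polAx, polRad]
  module

theorem polar_curvature_yt (hp : 0 < rad p) (har : DifferentiableAt ℝ ar (rad p, p.2.2))
    (hat : DifferentiableAt ℝ at' (rad p, p.2.2)) (hps : DifferentiableAt ℝ ps (rad p, p.2.2)) :
    -(pdy (polRad at') p) + pdt (polAy ar ps) p + brk (polAy ar ps p) (polRad at' p) =
      polSin p • (-(pdr at' (rad p, p.2.2)) + pdsnd ar (rad p, p.2.2) +
          brk (ar (rad p, p.2.2)) (at' (rad p, p.2.2))) +
        polCos p • (pdsnd ps (rad p, p.2.2) + brk (ps (rad p, p.2.2)) (at' (rad p, p.2.2))) := by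
  rw [pdy_polRad hp hat, pdt_polAy hp har hps, brk_polAy, polRad]
  module

theorem polar_covDeriv_x (ar ps : ℝ × ℝ → Mat n) (hp : 0 < rad p)
    (hph : DifferentiableAt ℝ ph (rad p, p.2.2)) :
    pdx (polRad ph) p - brk (polAx ar ps p) (polRad ph p) =
      polCos p • (pdr ph (rad p, p.2.2) - brk (ar (rad p, p.2.2)) (ph (rad p, p.2.2))) -
        polSin p • -brk (ps (rad p, p.2.2)) (ph (rad p, p.2.2)) := by
  rw [pdx_polRad hp hph, brk_polAx, polRad]
  module

theorem polar_covDeriv_y (ar ps : ℝ × ℝ → Mat n) (hp : 0 < rad p)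
    (hph : DifferentiableAt ℝ ph (rad p, p.2.2)) :
    pdy (polRad ph) p - brk (polAy ar ps p) (polRad ph p) =
      polSin p • (pdr ph (rad p, p.2.2) - brk (ar (rad p, p.2.2)) (ph (rad p, p.2.2))) +
        polCos p • -brk (ps (rad p, p.2.2)) (ph (rad p, p.2.2)) := by
  rw [pdy_polRad hp hph, brk_polAy, polRad]
  module

theorem monopoleEqAt_polar_iff (hp : 0 < rad p) (har : DifferentiableAt ℝ ar (rad p, p.2.2))
    (hat : DifferentiableAt ℝ at' (rad p, p.2.2)) (hph : DifferentiableAt ℝ ph (rad p, p.2.2))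
    (hps : DifferentiableAt ℝ ps (rad p, p.2.2)) :
    MonopoleEqAt (polAx ar ps) (polAy ar ps) (polRad at') (polRad ph) p ↔
      RadialMonopoleEqAt ar at' ph ps (rad p, p.2.2) := by
  rw [radialMonopoleEqAt_iff_curvature, MonopoleEqAt, polar_curvature_xy hp har hps,
    polar_curvature_xt hp har hat hps, polar_curvature_yt hp har hat hps,
    polar_covDeriv_x ar ps hp hph, polar_covDeriv_y ar ps hp hph,
    rotation_eq_neg_rotation_iff (polCos_sq_add_polSin_sq hp)]
  rfl

theorem radial_monopole_reduction_general
    (har : DifferentiableOn ℝ ar {q : ℝ × ℝ | 0 < q.1})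
    (hat : DifferentiableOn ℝ at' {q : ℝ × ℝ | 0 < q.1})
    (hph : DifferentiableOn ℝ ph {q : ℝ × ℝ | 0 < q.1})
    (hps : DifferentiableOn ℝ ps {q : ℝ × ℝ | 0 < q.1}) :
    (∀ p : P3, ¬(p.1 = 0 ∧ p.2.1 = 0) →
        MonopoleEqAt (polAx ar ps) (polAy ar ps) (polRad at') (polRad ph) p) ↔
      ∀ r t : ℝ, 0 < r → RadialMonopoleEqAt ar at' ph ps (r, t) := by
  have hopen : IsOpen {q : ℝ × ℝ | 0 < q.1} := isOpen_lt continuous_const continuous_fst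
  have pointwise : ∀ p : P3, 0 < rad p →
      (MonopoleEqAt (polAx ar ps) (polAy ar ps) (polRad at') (polRad ph) p ↔
        RadialMonopoleEqAt ar at' ph ps (rad p, p.2.2)) := fun p hp =>
    have hmem : {q : ℝ × ℝ | 0 < q.1} ∈ nhds (rad p, p.2.2) := hopen.mem_nhds hp
    monopoleEqAt_polar_iff hp (har.differentiableAt hmem) (hat.differentiableAt hmem)
      (hph.differentiableAt hmem) (hps.differentiableAt hmem)
  constructor
  · intro h r t hr
    have hrad : rad (r, 0, t) = r := rad_of_y_eq_zero hr.le t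
    simpa only [hrad] using (pointwise (r, 0, t) (hrad.symm ▸ hr)).1 (h _ fun h0 => hr.ne' h0.1)
  · intro h p hp
    have hrad : 0 < rad p := rad_pos_iff.2 hp
    exact (pointwise p hrad).2 (h (rad p) p.2.2 hrad)

end Reduction

/-- The space-time monopole equation for a rotationally symmetric field
on `(ℝ²∖{0}) × ℝ` is equivalent to the reduced system (i)–(iii) on `(0,∞) × ℝ`. -/
theorem radial_monopole_reduction {n : ℕ} (ar at' ph ps : ℝ × ℝ → Mat n)
    (hars : ContDiffOn ℝ (⊤ : ℕ∞) ar {q : ℝ × ℝ | 0 < q.1})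
    (hats : ContDiffOn ℝ (⊤ : ℕ∞) at' {q : ℝ × ℝ | 0 < q.1})
    (hphs : ContDiffOn ℝ (⊤ : ℕ∞) ph {q : ℝ × ℝ | 0 < q.1})
    (hpss : ContDiffOn ℝ (⊤ : ℕ∞) ps {q : ℝ × ℝ | 0 < q.1})
    (hara : ∀ q : ℝ × ℝ, 0 < q.1 → (ar q)ᴴ = -(ar q))
    (hata : ∀ q : ℝ × ℝ, 0 < q.1 → (at' q)ᴴ = -(at' q))
    (hpha : ∀ q : ℝ × ℝ, 0 < q.1 → (ph q)ᴴ = -(ph q))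
    (hpsa : ∀ q : ℝ × ℝ, 0 < q.1 → (ps q)ᴴ = -(ps q)) :
    (∀ p : P3, ¬(p.1 = 0 ∧ p.2.1 = 0) →
        MonopoleEqAt (polAx ar ps) (polAy ar ps) (polRad at') (polRad ph) p) ↔
      (∀ r t : ℝ, 0 < r →
        (-(pdsnd ar (r, t)) + pdr at' (r, t) + brk (at' (r, t)) (ar (r, t)) =
            brk (ph (r, t)) (ps (r, t))) ∧
        (pdsnd ps (r, t) - brk (at' (r, t)) (ps (r, t)) =
            pdr ph (r, t) - brk (ar (r, t)) (ph (r, t))) ∧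
        (pdsnd ph (r, t) - brk (at' (r, t)) (ph (r, t)) =
            pdr ps (r, t) - brk (ar (r, t)) (ps (r, t)) + ((r⁻¹ : ℝ) : ℂ) • ps (r, t))) := by
  exact radial_monopole_reduction_general (hars.differentiableOn (by simp))
    (hats.differentiableOn (by simp)) (hphs.differentiableOn (by simp))
    (hpss.differentiableOn (by simp))
end
end

section
/- Fix θ ∈ ℝ and let q : ℝ³ → U(n) be a smooth unitary-valued map (coordinates (x,y,t)). Write q_v = cosθ·∂_xq + sinθ·∂_yq. Then q satisfies the Hamiltonian evolution equation ∂_t(q⁻¹∂_tq) + [q⁻¹q_v, q⁻¹∂_tq] = ∂_x(q⁻¹∂_xq) + ∂_y(q⁻¹∂_yq) if and only if g := q⁻¹ satisfies the Ward equation with parameter −e^{iθ}: −∂_t((∂_tg)g⁻¹) + ∂_x((∂_xg)g⁻¹) + ∂_y((∂_yg)g⁻¹) + [(∂_tg)g⁻¹, cos(θ+π)·(∂_xg)g⁻¹ + sin(θ+π)·(∂_yg)g⁻¹] = 0. -/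
open Matrix Complex
open scoped Matrix ComplexConjugate

attribute [local instance] Matrix.normedAddCommGroup Matrix.normedSpace

noncomputable section

/-- The left-hand side of the Ward equation with parameter `e^{iθ}`, evaluated at `p`. -/
def WardOpAt {n : ℕ} (θ : ℝ) (g : P3 → Mat n) (p : P3) : Mat n :=
  -(pdt (fun q => pdt g q * (g q)⁻¹) p) + pdx (fun q => pdx g q * (g q)⁻¹) p +
    pdy (fun q => pdy g q * (g q)⁻¹) p +
    brk (pdt g p * (g p)⁻¹)
      ((Real.cos θ : ℂ) • (pdx g p * (g p)⁻¹) + (Real.sin θ : ℂ) • (pdy g p * (g p)⁻¹))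

/-!
For `g = q⁻¹` one has `(∂g) g⁻¹ = -q⁻¹ ∂q`. Substituting this into the Ward operator of `g` negates
the three second-order terms, while the bracket, being bilinear, is unchanged. Shifting `θ` by `π`
reverses the direction `(cos θ, sin θ)`, which swaps the two entries of the bracket and yields the
difference of the two sides of the Hamiltonian equation.
-/

section InverseDerivative

variable {𝕜 : Type*} [NontriviallyNormedField 𝕜]

lemma hasDerivAt_ringInverse_comp {R : Type*} [NormedRing R] [HasSummableGeomSeries R]
    [NormedAlgebra 𝕜 R] {c : 𝕜 → R} {c' : R} {s : 𝕜} (hc : HasDerivAt c c' s)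
    (hu : IsUnit (c s)) :
    HasDerivAt (fun r => Ring.inverse (c r))
      (-(Ring.inverse (c s) * c' * Ring.inverse (c s))) s := by
  obtain ⟨u, hu⟩ := hu
  have hinv := hasFDerivAt_ringInverse (𝕜 := 𝕜) u
  rw [hu] at hinv
  have hcomp := hinv.comp_hasDerivAt s hc
  simpa only [← hu, Ring.inverse_unit, _root_.neg_apply,
    ContinuousLinearMap.mulLeftRight_apply] using! hcomp

variable {m A : Type*} [Fintype m] [DecidableEq m] [NormedCommRing A] [CompleteSpace A]
  [NormedAlgebra 𝕜 A] {c : 𝕜 → Matrix m m A} {s : 𝕜}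

lemma hasDerivAt_matrix_inv {c' : Matrix m m A} (hc : HasDerivAt c c' s) (hu : IsUnit (c s)) :
    HasDerivAt (fun r => (c r)⁻¹) (-((c s)⁻¹ * c' * (c s)⁻¹)) s := by
  -- The entrywise sup norm is not submultiplicative; the `ℓ∞` operator norm is, and it induces the
  -- same topology, on which alone `HasDerivAt` depends.
  let _ : NormedRing (Matrix m m A) := Matrix.linftyOpNormedRing
  let _ : NormedAlgebra 𝕜 (Matrix m m A) := Matrix.linftyOpNormedAlgebra
  have : HasSummableGeomSeries (Matrix m m A) :=
    @instHasSummableGeomSeriesOfCompleteSpace _ _ (inferInstanceAs (CompleteSpace (m → m → A)))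
  simp only [Matrix.nonsing_inv_eq_ringInverse]
  exact hasDerivAt_ringInverse_comp hc hu

lemma deriv_matrix_inv_mul_inv_inv (hc : DifferentiableAt 𝕜 c s) (hu : IsUnit (c s)) :
    deriv (fun r => (c r)⁻¹) s * ((c s)⁻¹)⁻¹ = -((c s)⁻¹ * deriv c s) := by
  have hdet : IsUnit (c s).det := (Matrix.isUnit_iff_isUnit_det _).1 hu
  have hderiv : deriv (fun r => (c r)⁻¹) s = -((c s)⁻¹ * deriv c s * (c s)⁻¹) :=
    (hasDerivAt_matrix_inv hc.hasDerivAt hu).deriv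
  rw [hderiv, Matrix.nonsing_inv_nonsing_inv _ hdet,
    neg_mul, Matrix.nonsing_inv_mul_cancel_right _ _ hdet]

end InverseDerivative

section PartialDerivativesNeg

variable {W : Type*} [NormedAddCommGroup W] [NormedSpace ℝ W] (f : P3 → W) (p : P3)

lemma pdx_neg : pdx (fun r => -f r) p = -pdx f p := deriv.fun_neg

lemma pdy_neg : pdy (fun r => -f r) p = -pdy f p := deriv.fun_neg

lemma pdt_neg : pdt (fun r => -f r) p = -pdt f p := deriv.fun_neg

end PartialDerivativesNeg

section Ward

variable {n : ℕ}

lemma brk_neg_neg (X Y : Mat n) : brk (-X) (-Y) = brk X Y := by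
  simp only [brk, neg_mul_neg]

lemma brk_neg_right (X Y : Mat n) : brk X (-Y) = brk Y X := by
  simp only [brk, mul_neg, neg_mul]
  abel

variable {q : P3 → Mat n} {p : P3}

lemma pdx_inv_mul_inv_inv (hq : DifferentiableAt ℝ q p) (hu : IsUnit (q p)) :
    pdx (fun r => (q r)⁻¹) p * ((q p)⁻¹)⁻¹ = -((q p)⁻¹ * pdx q p) :=
  deriv_matrix_inv_mul_inv_inv (c := fun s => q (s, p.2.1, p.2.2))
    (DifferentiableAt.comp p.1 hq (by fun_prop)) hu

lemma pdy_inv_mul_inv_inv (hq : DifferentiableAt ℝ q p) (hu : IsUnit (q p)) :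
    pdy (fun r => (q r)⁻¹) p * ((q p)⁻¹)⁻¹ = -((q p)⁻¹ * pdy q p) :=
  deriv_matrix_inv_mul_inv_inv (c := fun s => q (p.1, s, p.2.2))
    (DifferentiableAt.comp p.2.1 hq (by fun_prop)) hu

lemma pdt_inv_mul_inv_inv (hq : DifferentiableAt ℝ q p) (hu : IsUnit (q p)) :
    pdt (fun r => (q r)⁻¹) p * ((q p)⁻¹)⁻¹ = -((q p)⁻¹ * pdt q p) :=
  deriv_matrix_inv_mul_inv_inv (c := fun s => q (p.1, p.2.1, s))
    (DifferentiableAt.comp p.2.2 hq (by fun_prop)) hu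

lemma wardOpAt_inv (θ : ℝ) (hq : Differentiable ℝ q) (hu : ∀ r, IsUnit (q r)) (p : P3) :
    WardOpAt θ (fun r => (q r)⁻¹) p =
      pdt (fun r => (q r)⁻¹ * pdt q r) p - pdx (fun r => (q r)⁻¹ * pdx q r) p -
        pdy (fun r => (q r)⁻¹ * pdy q r) p +
        brk ((q p)⁻¹ * pdt q p)
          ((q p)⁻¹ * ((Real.cos θ : ℂ) • pdx q p + (Real.sin θ : ℂ) • pdy q p)) := by
  have hx r := pdx_inv_mul_inv_inv (hq r) (hu r)
  have hy r := pdy_inv_mul_inv_inv (hq r) (hu r)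
  have ht r := pdt_inv_mul_inv_inv (hq r) (hu r)
  simp only [WardOpAt, hx, hy, ht, pdx_neg, pdy_neg, pdt_neg, smul_neg]
  rw [← neg_add (_ • _), brk_neg_neg, mul_add, Matrix.mul_smul, Matrix.mul_smul]
  abel

lemma wardOpAt_add_pi_inv (θ : ℝ) (hq : Differentiable ℝ q) (hu : ∀ r, IsUnit (q r)) (p : P3) :
    WardOpAt (θ + Real.pi) (fun r => (q r)⁻¹) p =
      pdt (fun r => (q r)⁻¹ * pdt q r) p +
          brk ((q p)⁻¹ * ((Real.cos θ : ℂ) • pdx q p + (Real.sin θ : ℂ) • pdy q p))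
            ((q p)⁻¹ * pdt q p) -
        (pdx (fun r => (q r)⁻¹ * pdx q r) p + pdy (fun r => (q r)⁻¹ * pdy q r) p) := by
  have hdir : (Real.cos (θ + Real.pi) : ℂ) • pdx q p + (Real.sin (θ + Real.pi) : ℂ) • pdy q p =
      -((Real.cos θ : ℂ) • pdx q p + (Real.sin θ : ℂ) • pdy q p) := by
    simp only [Real.cos_add_pi, Real.sin_add_pi, Complex.ofReal_neg, neg_smul, neg_add]
  rw [wardOpAt_inv _ hq hu, hdir, mul_neg, brk_neg_right]
  abel

end Ward

theorem hamiltonian_iff_ward_general {n : ℕ} (θ : ℝ) (q : P3 → Mat n)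
    (hqs : ContDiff ℝ 2 q)
    (hqu : ∀ p : P3, IsUnit (q p)) :
    (∀ p : P3,
        pdt (fun r => (q r)⁻¹ * pdt q r) p +
          brk ((q p)⁻¹ * ((Real.cos θ : ℂ) • pdx q p + (Real.sin θ : ℂ) • pdy q p))
            ((q p)⁻¹ * pdt q p) =
        pdx (fun r => (q r)⁻¹ * pdx q r) p + pdy (fun r => (q r)⁻¹ * pdy q r) p) ↔
      (∀ p : P3, WardOpAt (θ + Real.pi) (fun r => (q r)⁻¹) p = 0) := by
  have hq : Differentiable ℝ q := hqs.differentiable two_ne_zero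
  refine forall_congr' fun p => ?_
  rw [wardOpAt_add_pi_inv θ hq hqu p, sub_eq_zero]

/-- A smooth unitary-valued map `q` satisfies the Hamiltonian evolution
equation `∂_t(q⁻¹∂_tq) + [q⁻¹q_v, q⁻¹∂_tq] = ∂_x(q⁻¹∂_xq) + ∂_y(q⁻¹∂_yq)` iff `g = q⁻¹`
satisfies the Ward equation with parameter `−e^{iθ} = e^{i(θ+π)}`. -/
theorem hamiltonian_iff_ward {n : ℕ} (θ : ℝ) (q : P3 → Mat n)
    (hqs : ContDiff ℝ (⊤ : ℕ∞) q)
    (hqu : ∀ p : P3, q p ∈ Matrix.unitaryGroup (Fin n) ℂ) :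
    (∀ p : P3,
        pdt (fun r => (q r)⁻¹ * pdt q r) p +
          brk ((q p)⁻¹ * ((Real.cos θ : ℂ) • pdx q p + (Real.sin θ : ℂ) • pdy q p))
            ((q p)⁻¹ * pdt q p) =
        pdx (fun r => (q r)⁻¹ * pdx q r) p + pdy (fun r => (q r)⁻¹ * pdy q r) p) ↔
      (∀ p : P3, WardOpAt (θ + Real.pi) (fun r => (q r)⁻¹) p = 0) := by
  exact hamiltonian_iff_ward_general θ q (contDiff_infty.1 hqs 2)
    fun p => Unitary.isUnit_coe (U := ⟨q p, hqu p⟩)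
end
end

section
/- Let U ⊆ ℂ∖{0} be a nonempty open set closed under complex conjugation, and let ψ : ℝ³ × U → GL(n,ℂ) be smooth (coordinates (x,y,t,τ)). Suppose there exist smooth maps P, Q : ℝ³ → M_n(ℂ) such that for all τ ∈ U: τ∂_yψ − ∂_ξψ = Pψ and τ∂_ηψ − ∂_yψ = Qψ, and suppose ψ(x,y,t,τ̄)*ψ(x,y,t,τ) = 1 for all (x,y,t) and all τ ∈ U. Define A_t = A_x = −P/2, A_y = −Q/2, and φ = Q/2 (equivalently A_ξ = −P, A_η = 0, A_y = −φ = −Q/2). Then P and Q are anti-Hermitian-valued, so (A,φ) is a connection and Higgs field, and (A,φ) solves the space-time monopole equation. -/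
open Matrix Complex
open scoped Matrix ComplexConjugate

attribute [local instance] Matrix.normedAddCommGroup Matrix.normedSpace

noncomputable section

/-!
Both equations of the linear system involve an operator `D = τ∂_a − ∂_b` with constant coefficients,
applied to `ψ(·, τ)`. Such operators are derivations, they commute with each other, and
`(D_{τ̄} h)ᴴ = D_τ hᴴ`. Applying `D_τ` to `ψ(·, τ̄)ᴴ ψ(·, τ) = 1` therefore gives
`ψ(·, τ̄)ᴴ (Pᴴ + P) ψ(·, τ) = 0`, and likewise for `Q`. Commuting the two operators on `ψ(·, τ)`
gives the zero-curvature identity `τ (∂_y Q − ∂_η P) = ∂_ξ Q − ∂_y P − [Q, P]`. Apart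
from the factor `τ` nothing here depends on `τ`, so two values of `τ` force both sides to vanish,
and these two equations are the monopole equation for the fields built from `P` and `Q`.
-/

section TorsionFree

variable {R M : Type*} [Ring R] [IsDomain R] [AddCommGroup M] [Module R M]
  [Module.IsTorsionFree R M]

lemma eq_zero_and_eq_zero_of_forall_smul_eq {s : Set R} (hs : s.Nontrivial) {X Y : M}
    (h : ∀ r ∈ s, r • X = Y) : X = 0 ∧ Y = 0 := by
  obtain ⟨a, ha, b, hb, hab⟩ := hs
  have hX : X = 0 := by
    by_contra hX
    exact hab (smul_left_injective R hX ((h a ha).trans (h b hb).symm))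
  exact ⟨hX, by rw [← h a ha, hX, smul_zero]⟩

end TorsionFree

section Slice

variable {𝕜 E T F : Type*} [NontriviallyNormedField 𝕜] [NormedAddCommGroup E] [NormedSpace 𝕜 E]
  [NormedAddCommGroup T] [NormedSpace 𝕜 T] [NormedAddCommGroup F] [NormedSpace 𝕜 F]

lemma contDiff_of_contDiffOn_snd_mem {k : WithTop ℕ∞} {f : E × T → F} {s : Set T} {τ : T}
    (hf : ContDiffOn 𝕜 k f {q | q.2 ∈ s}) (hτ : τ ∈ s) : ContDiff 𝕜 k fun r => f (r, τ) :=
  contDiffOn_univ.mp <|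
    hf.comp (contDiff_id.prodMk contDiff_const).contDiffOn fun _ _ => hτ

end Slice

section PencilDeriv

variable {E F : Type*} [NormedAddCommGroup E] [NormedSpace ℝ E]
  [NormedAddCommGroup F] [NormedSpace ℝ F] [Module ℂ F]

/-- The first-order operator `τ∂_a − ∂_b` with constant coefficients, for directions `a`, `b`.
Both operators of the linear system are of this form: `τ∂_y − ∂_ξ` and `τ∂_η − ∂_y`. -/
def pencilDeriv (τ : ℂ) (a b : E) (f : E → F) (p : E) : F :=
  τ • fderiv ℝ f p a - fderiv ℝ f p b

variable {f : E → F} {p : E}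

lemma pencilDeriv_eq_of_hasFDerivAt {f' : E →L[ℝ] F} (hf : HasFDerivAt f f' p) (τ : ℂ) (a b : E) :
    pencilDeriv τ a b f p = τ • f' a - f' b := by
  rw [pencilDeriv, hf.fderiv]

variable [SMulCommClass ℝ ℂ F] [ContinuousConstSMul ℂ F]

lemma hasFDerivAt_pencilDeriv (hf : ContDiffAt ℝ 2 f p) (τ : ℂ) (a b : E) :
    HasFDerivAt (pencilDeriv τ a b f)
      (τ • (fderiv ℝ (fderiv ℝ f) p).flip a - (fderiv ℝ (fderiv ℝ f) p).flip b) p := by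
  have hf' : HasFDerivAt (fderiv ℝ f) (fderiv ℝ (fderiv ℝ f) p) p :=
    ((hf.fderiv_right (m := 1) le_rfl).differentiableAt one_ne_zero).hasFDerivAt
  have hdir (v : E) :
      HasFDerivAt (fun q => fderiv ℝ f q v) ((fderiv ℝ (fderiv ℝ f) p).flip v) p := by
    simpa using hf'.clm_apply (hasFDerivAt_const v p)
  exact ((hdir a).const_smul τ).sub (hdir b)

lemma pencilDeriv_comm (hf : ContDiffAt ℝ 2 f p) (σ τ : ℂ) (a b c d : E) :
    pencilDeriv σ a b (pencilDeriv τ c d f) p = pencilDeriv τ c d (pencilDeriv σ a b f) p := by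
  have hsymm : IsSymmSndFDerivAt ℝ f p := hf.isSymmSndFDerivAt (by simp)
  simp only [pencilDeriv_eq_of_hasFDerivAt (hasFDerivAt_pencilDeriv hf _ _ _),
    _root_.sub_apply, _root_.smul_apply, ContinuousLinearMap.flip_apply]
  rw [hsymm.eq a c, hsymm.eq a d, hsymm.eq b c, hsymm.eq b d]
  module

end PencilDeriv

section MatrixValued

variable {E ι : Type*} [NormedAddCommGroup E] [NormedSpace ℝ E] [Fintype ι]
  {f g h P Q : E → Matrix ι ι ℂ} {p : E}

lemma hasFDerivAt_matrix_mul {f' g' : E →L[ℝ] Matrix ι ι ℂ}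
    (hf : HasFDerivAt f f' p) (hg : HasFDerivAt g g' p) :
    HasFDerivAt (fun q => f q * g q)
      ((LinearMap.mul ℝ (Matrix ι ι ℂ)).toContinuousBilinearMap.precompR E (f p) g' +
        (LinearMap.mul ℝ (Matrix ι ι ℂ)).toContinuousBilinearMap.precompL E f' (g p)) p :=
  (LinearMap.mul ℝ (Matrix ι ι ℂ)).toContinuousBilinearMap.hasFDerivAt_of_bilinear hf hg

lemma pencilDeriv_mul (hf : DifferentiableAt ℝ f p) (hg : DifferentiableAt ℝ g p)
    (τ : ℂ) (a b : E) :
    pencilDeriv τ a b (fun q => f q * g q) p =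
      pencilDeriv τ a b f p * g p + f p * pencilDeriv τ a b g p := by
  obtain ⟨f', hf'⟩ := hf
  obtain ⟨g', hg'⟩ := hg
  rw [pencilDeriv_eq_of_hasFDerivAt (hasFDerivAt_matrix_mul hf' hg'),
    pencilDeriv_eq_of_hasFDerivAt hf', pencilDeriv_eq_of_hasFDerivAt hg']
  change τ • (f p * g' a + f' a * g p) - (f p * g' b + f' b * g p) = _
  simp only [sub_mul, mul_sub, smul_mul_assoc, mul_smul_comm]
  module

lemma pencilDeriv_conjTranspose (hf : DifferentiableAt ℝ f p) (τ : ℂ) (a b : E) :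
    pencilDeriv τ a b (fun q => (f q)ᴴ) p = (pencilDeriv (conj τ) a b f p)ᴴ := by
  obtain ⟨f', hf'⟩ := hf
  rw [pencilDeriv_eq_of_hasFDerivAt hf', conjTranspose_sub, conjTranspose_smul, RCLike.star_def,
    conj_conj]
  exact pencilDeriv_eq_of_hasFDerivAt hf'.star τ a b

variable [DecidableEq ι]

lemma conjTranspose_eq_neg_of_pencilDeriv_eq_mul {τ : ℂ} {a b : E} {X : Matrix ι ι ℂ}
    (hg : DifferentiableAt ℝ g p) (hh : DifferentiableAt ℝ h p)
    (hhg : ∀ q, (h q)ᴴ * g q = 1)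
    (hgX : pencilDeriv τ a b g p = X * g p) (hhX : pencilDeriv (conj τ) a b h p = X * h p) :
    Xᴴ = -X := by
  have hgh : g p * (h p)ᴴ = 1 := mul_eq_one_comm.mp (hhg p)
  have hzero : (h p)ᴴ * (Xᴴ + X) * g p = 0 := by
    calc (h p)ᴴ * (Xᴴ + X) * g p
        = (X * h p)ᴴ * g p + (h p)ᴴ * (X * g p) := by rw [conjTranspose_mul]; noncomm_ring
      _ = pencilDeriv τ a b (fun q => (h q)ᴴ * g q) p := by
          rw [pencilDeriv_mul (f := fun q => (h q)ᴴ) hh.star hg, pencilDeriv_conjTranspose hh, hgX,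
            hhX]
      _ = 0 := by simp [hhg, pencilDeriv]
  rw [eq_neg_iff_add_eq_zero]
  calc Xᴴ + X = g p * (h p)ᴴ * (Xᴴ + X) * (g p * (h p)ᴴ) := by rw [hgh, one_mul, mul_one]
    _ = g p * ((h p)ᴴ * (Xᴴ + X) * g p) * (h p)ᴴ := by simp only [mul_assoc]
    _ = 0 := by rw [hzero, mul_zero, zero_mul]

lemma differentiable_of_pencilDeriv_eq_mul {τ : ℂ} {a b : E}
    (hg : ContDiff ℝ 2 g) (hh : Differentiable ℝ h) (hgh : ∀ q, g q * h q = 1)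
    (hP : ∀ q, pencilDeriv τ a b g q = P q * g q) : Differentiable ℝ P := by
  have hP' : P = fun q => pencilDeriv τ a b g q * h q := by
    funext q
    rw [hP, mul_assoc, hgh, mul_one]
  rw [hP']
  exact fun q => (hasFDerivAt_matrix_mul (hasFDerivAt_pencilDeriv hg.contDiffAt τ a b)
    (hh q).hasFDerivAt).differentiableAt

lemma pencilDeriv_zeroCurvature {σ τ : ℂ} {a b c d : E} (hg : ContDiffAt ℝ 2 g p)
    (hgp : IsUnit (g p)) (hPp : DifferentiableAt ℝ P p) (hQp : DifferentiableAt ℝ Q p)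
    (hP : ∀ q, pencilDeriv σ a b g q = P q * g q) (hQ : ∀ q, pencilDeriv τ c d g q = Q q * g q) :
    pencilDeriv σ a b Q p + Q p * P p = pencilDeriv τ c d P p + P p * Q p := by
  have hgd : DifferentiableAt ℝ g p := hg.differentiableAt two_ne_zero
  apply hgp.mul_right_cancel
  calc (pencilDeriv σ a b Q p + Q p * P p) * g p
      = pencilDeriv σ a b (fun q => Q q * g q) p := by
        rw [pencilDeriv_mul hQp hgd, hP, add_mul, mul_assoc]
    _ = pencilDeriv τ c d (fun q => P q * g q) p := by
        rw [← funext hP, ← funext hQ]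
        exact pencilDeriv_comm hg σ τ a b c d
    _ = (pencilDeriv τ c d P p + P p * Q p) * g p := by
        rw [pencilDeriv_mul hPp hgd, hQ, add_mul, mul_assoc]

end MatrixValued

section SpaceTime

variable {W : Type*} [NormedAddCommGroup W] [NormedSpace ℝ W] {f : P3 → W} {p : P3}

lemma pdx_eq_fderiv (hf : DifferentiableAt ℝ f p) : pdx f p = fderiv ℝ f p (1, 0, 0) := by
  have hline : HasDerivAt (fun s : ℝ => ((s, p.2.1, p.2.2) : P3)) (1, 0, 0) p.1 :=
    (hasDerivAt_id p.1).prodMk ((hasDerivAt_const _ _).prodMk (hasDerivAt_const _ _))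
  exact (hf.hasFDerivAt.comp_hasDerivAt p.1 hline).deriv

lemma pdy_eq_fderiv (hf : DifferentiableAt ℝ f p) : pdy f p = fderiv ℝ f p (0, 1, 0) := by
  have hline : HasDerivAt (fun s : ℝ => ((p.1, s, p.2.2) : P3)) (0, 1, 0) p.2.1 :=
    (hasDerivAt_const _ _).prodMk ((hasDerivAt_id p.2.1).prodMk (hasDerivAt_const _ _))
  exact (hf.hasFDerivAt.comp_hasDerivAt p.2.1 hline).deriv

lemma pdt_eq_fderiv (hf : DifferentiableAt ℝ f p) : pdt f p = fderiv ℝ f p (0, 0, 1) := by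
  have hline : HasDerivAt (fun s : ℝ => ((p.1, p.2.1, s) : P3)) (0, 0, 1) p.2.2 :=
    (hasDerivAt_const _ _).prodMk ((hasDerivAt_const _ _).prodMk (hasDerivAt_id p.2.2))
  exact (hf.hasFDerivAt.comp_hasDerivAt p.2.2 hline).deriv

lemma pdxi_eq_fderiv (hf : DifferentiableAt ℝ f p) : pdxi f p = fderiv ℝ f p (1, 0, 1) := by
  rw [pdxi, pdt_eq_fderiv hf, pdx_eq_fderiv hf, ← map_add]
  simp

lemma pdeta_eq_fderiv (hf : DifferentiableAt ℝ f p) : pdeta f p = fderiv ℝ f p (-1, 0, 1) := by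
  rw [pdeta, pdt_eq_fderiv hf, pdx_eq_fderiv hf, ← map_sub]
  simp

variable [Module ℂ W]

lemma pencilDeriv_y_xi (hf : DifferentiableAt ℝ f p) (τ : ℂ) :
    pencilDeriv τ (0, 1, 0) (1, 0, 1) f p = τ • pdy f p - pdxi f p := by
  rw [pencilDeriv, pdy_eq_fderiv hf, pdxi_eq_fderiv hf]

lemma pencilDeriv_eta_y (hf : DifferentiableAt ℝ f p) (τ : ℂ) :
    pencilDeriv τ (-1, 0, 1) (0, 1, 0) f p = τ • pdeta f p - pdy f p := by
  rw [pencilDeriv, pdy_eq_fderiv hf, pdeta_eq_fderiv hf]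

end SpaceTime

section Monopole

variable {n : ℕ}

lemma smul_pdy_sub_pdeta_eq {τ : ℂ} {g P Q : P3 → Mat n} {p : P3} (hg : ContDiffAt ℝ 2 g p)
    (hgp : IsUnit (g p)) (hPp : DifferentiableAt ℝ P p) (hQp : DifferentiableAt ℝ Q p)
    (hP : ∀ q, pencilDeriv τ (0, 1, 0) (1, 0, 1) g q = P q * g q)
    (hQ : ∀ q, pencilDeriv τ (-1, 0, 1) (0, 1, 0) g q = Q q * g q) :
    τ • (pdy Q p - pdeta P p) = pdxi Q p - pdy P p - brk (Q p) (P p) := by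
  have hcurv := pencilDeriv_zeroCurvature hg hgp hPp hQp hP hQ
  rw [pencilDeriv_y_xi hQp, pencilDeriv_eta_y hPp] at hcurv
  rw [brk]
  linear_combination (norm := module) hcurv

lemma monopoleEqAt_iff_zeroCurvature (P Q : P3 → Mat n) (p : P3) :
    MonopoleEqAt (fun p => -((2⁻¹ : ℂ) • P p)) (fun p => -((2⁻¹ : ℂ) • Q p))
        (fun p => -((2⁻¹ : ℂ) • P p)) (fun p => (2⁻¹ : ℂ) • Q p) p ↔
      pdy Q p - pdeta P p = 0 ∧ pdxi Q p - pdy P p - brk (Q p) (P p) = 0 := by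
  simp only [MonopoleEqAt, brk, pdxi, pdeta, pdx, pdy, pdt, deriv.fun_neg,
    deriv_fun_const_smul_field, neg_mul, mul_neg, smul_mul_assoc, mul_smul_comm]
  constructor
  · rintro ⟨hxy, hxt, -⟩
    constructor
    · linear_combination (norm := module) (2 : ℂ) • hxt
    · linear_combination (norm := module) (2 : ℂ) • hxy
  · rintro ⟨hlinear, hconst⟩
    refine ⟨?_, ?_, ?_⟩
    · linear_combination (norm := module) (2⁻¹ : ℂ) • hconst
    · linear_combination (norm := module) (2⁻¹ : ℂ) • hlinear
    · linear_combination (norm := module) -(2⁻¹ : ℂ) • hconst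

theorem monopole_from_ward_frame_general {U : Set ℂ} (hU : U.Nontrivial)
    (hUc : ∀ τ ∈ U, conj τ ∈ U) {ψ : P3 → ℂ → Mat n}
    (hψ : ∀ τ ∈ U, ContDiff ℝ 2 (fun r => ψ r τ)) {P Q : P3 → Mat n}
    (heq : ∀ τ ∈ U, ∀ p : P3,
      τ • pdy (fun r => ψ r τ) p - pdxi (fun r => ψ r τ) p = P p * ψ p τ ∧
      τ • pdeta (fun r => ψ r τ) p - pdy (fun r => ψ r τ) p = Q p * ψ p τ)
    (hreal : ∀ τ ∈ U, ∀ p : P3, (ψ p (conj τ))ᴴ * ψ p τ = 1) :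
    SkewHerm P ∧ SkewHerm Q ∧
      MonopoleEq (fun p => -((2⁻¹ : ℂ) • P p)) (fun p => -((2⁻¹ : ℂ) • Q p))
        (fun p => -((2⁻¹ : ℂ) • P p)) (fun p => (2⁻¹ : ℂ) • Q p) := by
  have hψd (τ) (hτ : τ ∈ U) : Differentiable ℝ (fun r => ψ r τ) :=
    (hψ τ hτ).differentiable two_ne_zero
  have hψP (τ) (hτ : τ ∈ U) (p) :
      pencilDeriv τ (0, 1, 0) (1, 0, 1) (fun r => ψ r τ) p = P p * ψ p τ :=
    (pencilDeriv_y_xi (hψd τ hτ p) τ).trans (heq τ hτ p).1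
  have hψQ (τ) (hτ : τ ∈ U) (p) :
      pencilDeriv τ (-1, 0, 1) (0, 1, 0) (fun r => ψ r τ) p = Q p * ψ p τ :=
    (pencilDeriv_eta_y (hψd τ hτ p) τ).trans (heq τ hτ p).2
  have hψinv (τ) (hτ : τ ∈ U) (p) : ψ p τ * (ψ p (conj τ))ᴴ = 1 :=
    mul_eq_one_comm.mp (hreal τ hτ p)
  obtain ⟨τ, hτ⟩ := hU.nonempty
  have hτc : conj τ ∈ U := hUc τ hτ
  have hPd : Differentiable ℝ P :=
    differentiable_of_pencilDeriv_eq_mul (hψ τ hτ) (hψd _ hτc).star (hψinv τ hτ) (hψP τ hτ)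
  have hQd : Differentiable ℝ Q :=
    differentiable_of_pencilDeriv_eq_mul (hψ τ hτ) (hψd _ hτc).star (hψinv τ hτ) (hψQ τ hτ)
  refine ⟨fun p => ?_, fun p => ?_, fun p => ?_⟩
  · exact conjTranspose_eq_neg_of_pencilDeriv_eq_mul (hψd τ hτ p) (hψd _ hτc p) (hreal τ hτ)
      (hψP τ hτ p) (hψP _ hτc p)
  · exact conjTranspose_eq_neg_of_pencilDeriv_eq_mul (hψd τ hτ p) (hψd _ hτc p) (hreal τ hτ)
      (hψQ τ hτ p) (hψQ _ hτc p)
  · rw [monopoleEqAt_iff_zeroCurvature]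
    exact eq_zero_and_eq_zero_of_forall_smul_eq hU fun σ hσ =>
      smul_pdy_sub_pdeta_eq (hψ σ hσ).contDiffAt (.of_mul_eq_one _ (hψinv σ hσ p)) (hPd p) (hQd p)
        (hψP σ hσ) (hψQ σ hσ)

end Monopole

/-- A family `ψ(·,τ)`, `τ ∈ U`, of `GL(n,ℂ)`-valued maps satisfying
`τ∂_yψ − ∂_ξψ = Pψ`, `τ∂_ηψ − ∂_yψ = Qψ` with `τ`-independent `P`, `Q`, and the reality
condition `ψ(·,τ̄)*ψ(·,τ) = 1`, produces anti-Hermitian `P`, `Q`, and the fields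
`A_t = A_x = −P/2`, `A_y = −Q/2`, `φ = Q/2` solve the space-time monopole equation. -/
theorem monopole_from_ward_frame {n : ℕ} (U : Set ℂ)
    (hUne : U.Nonempty) (hUo : IsOpen U) (hU0 : (0 : ℂ) ∉ U)
    (hUc : ∀ τ ∈ U, conj τ ∈ U)
    (ψ : P3 → ℂ → Mat n)
    (hψs : ContDiffOn ℝ (⊤ : ℕ∞) (fun q : P3 × ℂ => ψ q.1 q.2) {q : P3 × ℂ | q.2 ∈ U})
    (hψgl : ∀ (p : P3) (τ : ℂ), τ ∈ U → IsUnit (ψ p τ))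
    (P Q : P3 → Mat n) (hPs : ContDiff ℝ (⊤ : ℕ∞) P) (hQs : ContDiff ℝ (⊤ : ℕ∞) Q)
    (heq : ∀ τ ∈ U, ∀ p : P3,
      τ • pdy (fun r => ψ r τ) p - pdxi (fun r => ψ r τ) p = P p * ψ p τ ∧
      τ • pdeta (fun r => ψ r τ) p - pdy (fun r => ψ r τ) p = Q p * ψ p τ)
    (hreal : ∀ τ ∈ U, ∀ p : P3, (ψ p (conj τ))ᴴ * ψ p τ = 1) :
    (∀ p : P3, (P p)ᴴ = -(P p)) ∧ (∀ p : P3, (Q p)ᴴ = -(Q p)) ∧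
      MonopoleEq (fun p => -((2⁻¹ : ℂ) • P p)) (fun p => -((2⁻¹ : ℂ) • Q p))
        (fun p => -((2⁻¹ : ℂ) • P p)) (fun p => (2⁻¹ : ℂ) • Q p) := by
  exact monopole_from_ward_frame_general
    (infinite_of_mem_nhds _ (hUo.mem_nhds hUne.some_mem)).nontrivial hUc
    (fun _ hτ => (contDiff_of_contDiffOn_snd_mem hψs hτ).of_le (by norm_cast)) heq hreal
end
end

section
/- (Algebraic Bäcklund transformation.) Let Σ ⊂ ℂ be a finite set closed under conjugation, α ∈ ℂ∖ℝ with α, ᾱ ∉ Σ, and let ψ : ℝ³ × (ℂ∖Σ) → GL(n,ℂ) be a Ward frame on ℂ∖Σ with coefficient maps P, Q (so ψ is smooth, holomorphic in τ, τ∂_yψ − ∂_ξψ = Pψ, τ∂_ηψ − ∂_yψ = Qψ for all τ ∉ Σ, and ψ(x,y,t,τ̄)*ψ(x,y,t,τ) = 1). Let π : ℝ³ → M_n(ℂ) be a smooth Hermitian-projection-valued map satisfying the 1-soliton equations (α∂_yπ − ∂_ξπ)π = 0 and (α∂_ηπ − ∂_yπ)π = 0, and let π̃(x,y,t) be the Hermitian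 (orthogonal) projection of ℂⁿ onto the subspace ψ(x,y,t,α)(range π(x,y,t)). Then: (0) π̃ is smooth; (1) ψ̃ := g_{α,π̃}·ψ·g_{α,π}⁻¹ extends holomorphically in τ to τ = α and τ = ᾱ with invertible values there; (2) ψ₁ := g_{α,π̃}·ψ is a Ward frame on (ℂ∖Σ)∖{α,ᾱ}: it satisfies ψ₁(x,y,t,τ̄)*ψ₁(x,y,t,τ) = 1 and τ∂_yψ₁ − ∂_ξψ₁ = (P + (ᾱ−α)∂_yπ̃)ψ₁, τ∂_ηψ₁ − ∂_yψ₁ = (Q + (ᾱ−α)∂_ηπ̃)ψ₁ for all τ in its domain. -/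
open Matrix Complex
open scoped Matrix ComplexConjugate

attribute [local instance] Matrix.normedAddCommGroup Matrix.normedSpace

noncomputable section

/-- The simple-element `g_{α,π}(τ) = 1 + ((α−ᾱ)/(τ−α))·π^⊥`. -/
def solg {n : ℕ} (a : ℂ) (Pr : P3 → Mat n) (p : P3) (τ : ℂ) : Mat n :=
  1 + ((a - conj a) / (τ - a)) • ((1 : Mat n) - Pr p)

/-- The inverse `g_{α,π}(τ)⁻¹ = 1 + ((ᾱ−α)/(τ−ᾱ))·π^⊥`. -/
def solginv {n : ℕ} (a : ℂ) (Pr : P3 → Mat n) (p : P3) (τ : ℂ) : Mat n :=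
  1 + ((conj a - a) / (τ - conj a)) • ((1 : Mat n) - Pr p)

/-!
The product `g_{a,π̃}(τ) ψ(τ) g_{a,π}(τ)⁻¹` has at most simple poles at `a` and `ā`, with residues
proportional to `π̃^⊥ ψ(a) π` and `π̃ ψ(ā) π^⊥`. Both vanish because `π̃` projects onto the image of
`range π` under `ψ(a)` and, by the reality condition, `ψ(ā)ᴴ` is the inverse of `ψ(a)`. The reality
condition extends to the removed points by continuity and gives invertibility there.

With `L_τ = τ ∂_v - ∂_w`, the 1-soliton equation `(L_a π) π = 0` and `L_a ψ(a) = P ψ(a)` give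
`(L_a π̃) π̃ = π̃^⊥ P π̃`. Taking adjoints, with `P` anti-Hermitian, yields
`L_a π̃ = [P, π̃] + (a - ā) (∂_v π̃) π̃^⊥`, which is what is needed for
`L_τ (g_{a,π̃} ψ) = (P + (ā - a) ∂_v π̃) g_{a,π̃} ψ`.

Smoothness of `π̃` holds because `e = ψ(a) π ψ(a)⁻¹` is a smooth oblique projection with the same
range, and then `π̃ = e (1 + e - eᴴ)⁻¹`.
-/

section SimpleElements

variable {𝕜 A : Type*} [Field 𝕜] [Ring A] [Algebra 𝕜 A]

lemma div_sub_add_div_sub_add_mul_eq_zero {a b τ : 𝕜} (ha : τ ≠ a) (hb : τ ≠ b) :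
    (a - b) / (τ - a) + (b - a) / (τ - b) + (a - b) / (τ - a) * ((b - a) / (τ - b)) = 0 := by
  have := sub_ne_zero.2 ha
  have := sub_ne_zero.2 hb
  field_simp
  ring

lemma one_add_smul_mul_mul_one_add_smul {c d : 𝕜} (h : c + d + c * d = 0) (q x p : A) :
    (1 + c • (1 - q)) * x * (1 + d • (1 - p)) =
      x + c • ((1 - q) * x * p) + d • (q * x * (1 - p)) := by
  have hcd : c * d = -c - d := by linear_combination h
  have expand : (1 + c • (1 - q)) * x * (1 + d • (1 - p)) =
      x + c • ((1 - q) * x) + d • (x * (1 - p)) + (c * d) • ((1 - q) * x * (1 - p)) := by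
    simp only [add_mul, mul_add, one_mul, mul_one, smul_mul_assoc, mul_smul_comm, smul_add,
      smul_smul, mul_comm d c]
    abel
  rw [expand, hcd]
  simp only [sub_smul, neg_smul, mul_sub, sub_mul, one_mul, mul_one, smul_sub]
  abel

variable {n : ℕ} {a τ : ℂ} {p : P3} {Pr : P3 → Mat n}

lemma solg_mul_mul_solginv (Prt Pr : P3 → Mat n) (X : Mat n) (ha : τ ≠ a) (hac : τ ≠ conj a) :
    solg a Prt p τ * X * solginv a Pr p τ =
      X + ((a - conj a) / (τ - a)) • ((1 - Prt p) * X * Pr p) +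
        ((conj a - a) / (τ - conj a)) • (Prt p * X * (1 - Pr p)) :=
  one_add_smul_mul_mul_one_add_smul (div_sub_add_div_sub_add_mul_eq_zero ha hac) _ _ _

lemma solg_mul_solginv (hPr : IsIdempotentElem (Pr p)) (ha : τ ≠ a) (hac : τ ≠ conj a) :
    solg a Pr p τ * solginv a Pr p τ = 1 := by
  have h := solg_mul_mul_solginv (p := p) Pr Pr 1 ha hac
  simpa only [mul_one, hPr.one_sub_mul_self, hPr.mul_one_sub_self,
    smul_zero, add_zero] using h

lemma solginv_mul_solg (hPr : IsIdempotentElem (Pr p)) (ha : τ ≠ a) (hac : τ ≠ conj a) :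
    solginv a Pr p τ * solg a Pr p τ = 1 :=
  mul_eq_one_comm.1 (solg_mul_solginv hPr ha hac)

lemma isUnit_solg (hPr : IsIdempotentElem (Pr p)) (ha : τ ≠ a) (hac : τ ≠ conj a) :
    IsUnit (solg a Pr p τ) :=
  .of_mul_eq_one _ (solg_mul_solginv hPr ha hac)

lemma conjTranspose_solg_conj (hPr : IsSelfAdjoint (Pr p)) :
    (solg a Pr p (conj τ))ᴴ = solginv a Pr p τ := by
  have : (Pr p)ᴴ = Pr p := hPr
  simp [solg, solginv, this]

lemma conjTranspose_solginv_conj (hPr : IsSelfAdjoint (Pr p)) :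
    (solginv a Pr p (conj τ))ᴴ = solg a Pr p τ := by
  rw [← conjTranspose_solg_conj hPr, conj_conj, conjTranspose_conjTranspose]

lemma conjTranspose_solg_mul_conj_mul_self {X Y : Mat n} (hYX : Yᴴ * X = 1)
    (hPr : IsStarProjection (Pr p)) (ha : τ ≠ a) (hac : τ ≠ conj a) :
    (solg a Pr p (conj τ) * Y)ᴴ * (solg a Pr p τ * X) = 1 := by
  rw [conjTranspose_mul, conjTranspose_solg_conj hPr.isSelfAdjoint, mul_assoc,
    ← mul_assoc (solginv a Pr p τ), solginv_mul_solg hPr.isIdempotentElem ha hac, one_mul, hYX]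

lemma contDiffOn_solg (a : ℂ) (hPr : ContDiff ℝ (⊤ : ℕ∞) Pr) :
    ContDiffOn ℝ (⊤ : ℕ∞) (fun q : P3 × ℂ => solg a Pr q.1 q.2) {q | q.2 ≠ a} := by
  have hden : ContDiffOn ℝ (⊤ : ℕ∞) (fun q : P3 × ℂ => q.2 - a) {q | q.2 ≠ a} :=
    (contDiff_snd.sub contDiff_const).contDiffOn
  have hcoef :
      ContDiffOn ℝ (⊤ : ℕ∞) (fun q : P3 × ℂ => (a - conj a) / (q.2 - a)) {q | q.2 ≠ a} := by
    simp only [div_eq_mul_inv]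
    exact contDiffOn_const.mul (hden.inv fun _ hq => sub_ne_zero.2 hq)
  exact contDiffOn_const.add
    (hcoef.smul (contDiff_const.sub (hPr.comp contDiff_fst)).contDiffOn)

lemma differentiableAt_solg (ha : τ ≠ a) (p : P3) : DifferentiableAt ℂ (solg a Pr p) τ := by
  have hcoef : DifferentiableAt ℂ (fun s => (a - conj a) / (s - a)) τ :=
    (differentiableAt_const _).div (differentiableAt_id.sub_const a) (sub_ne_zero.2 ha)
  exact (hcoef.smul_const _).const_add 1

end SimpleElements

section Projections

variable {R m k : Type*} [Fintype m] [Fintype k]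

lemma mul_eq_right_of_range_le [CommSemiring R] {q : Matrix m m R}
    {M : Matrix m k R} (hq : IsIdempotentElem q)
    (h : LinearMap.range M.mulVecLin ≤ LinearMap.range q.mulVecLin) : q * M = M := by
  classical
  refine Matrix.ext_of_mulVec_single fun i => ?_
  obtain ⟨w, hw : q *ᵥ w = M *ᵥ Pi.single i 1⟩ := h ⟨Pi.single i 1, rfl⟩
  rw [← mulVec_mulVec, ← hw, mulVec_mulVec, hq.eq]

lemma mul_mul_eq_of_range_eq_map [CommSemiring R] {A p q : Matrix m m R} (hq : IsIdempotentElem q)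
    (h : LinearMap.range q.mulVecLin = (LinearMap.range p.mulVecLin).map A.mulVecLin) :
    q * (A * p) = A * p :=
  mul_eq_right_of_range_le hq (by rw [mulVecLin_mul, LinearMap.range_comp, h])

variable [DecidableEq m]

lemma range_eq_map_of_mul_eq_one [CommSemiring R] {A B p q : Matrix m m R} (hBA : B * A = 1)
    (h : LinearMap.range q.mulVecLin = (LinearMap.range p.mulVecLin).map A.mulVecLin) :
    LinearMap.range p.mulVecLin = (LinearMap.range q.mulVecLin).map B.mulVecLin := by
  rw [h, ← Submodule.map_comp, ← mulVecLin_mul, hBA, mulVecLin_one, Submodule.map_id]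

lemma mul_mul_one_sub_eq_zero_of_range_eq_map [CommRing R] [StarRing R] {A B p q : Matrix m m R}
    (hBA : Bᴴ * A = 1) (hp : IsStarProjection p) (hq : IsSelfAdjoint q)
    (h : LinearMap.range q.mulVecLin = (LinearMap.range p.mulVecLin).map A.mulVecLin) :
    q * B * (1 - p) = 0 := by
  have hBq : p * (Bᴴ * q) = Bᴴ * q :=
    mul_mul_eq_of_range_eq_map hp.isIdempotentElem (range_eq_map_of_mul_eq_one hBA h)
  have hp' : pᴴ = p := hp.isSelfAdjoint
  have hq' : qᴴ = q := hq
  have hqB := congrArg conjTranspose hBq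
  simp only [conjTranspose_mul, conjTranspose_conjTranspose, hp', hq'] at hqB
  rw [mul_sub, mul_one, hqB, sub_self]

open scoped ComplexOrder in
lemma isUnit_one_add_of_conjTranspose_eq_neg {𝕜 : Type*} [RCLike 𝕜] {K : Matrix m m 𝕜}
    (hK : Kᴴ = -K) : IsUnit (1 + K) := by
  have factor : (1 - K) * (1 + K) = 1 + Kᴴ * K := by
    rw [hK]
    noncomm_ring
  have hpos : (1 + Kᴴ * K).PosDef :=
    PosDef.one.add_posSemidef (posSemidef_conjTranspose_mul_self K)
  exact isUnit_of_mul_isUnit_right (factor ▸ hpos.isUnit)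

lemma eq_mul_inv_one_add_sub_conjTranspose {𝕜 : Type*} [RCLike 𝕜] {e q : Matrix m m 𝕜}
    (hq : IsSelfAdjoint q) (hqe : q * e = e) (heq : e * q = q) :
    q = e * (1 + (e - eᴴ))⁻¹ := by
  have hq' : qᴴ = q := hq
  have hqe' : q * eᴴ = q := by simpa only [conjTranspose_mul, hq'] using congrArg conjTranspose heq
  have hunit : IsUnit (1 + (e - eᴴ)) := isUnit_one_add_of_conjTranspose_eq_neg (by simp)
  have hmul : q * (1 + (e - eᴴ)) = e := by
    rw [mul_add, mul_sub, mul_one, hqe, hqe']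
    abel
  calc q = q * (1 + (e - eᴴ)) * (1 + (e - eᴴ))⁻¹ :=
        (mul_nonsing_inv_cancel_right _ _ ((isUnit_iff_isUnit_det _).1 hunit)).symm
    _ = e * (1 + (e - eᴴ))⁻¹ := by rw [hmul]

end Projections

section MatrixCalculus

variable {𝕜 R m : Type*} [NontriviallyNormedField 𝕜] [NormedField R] [NormedAlgebra 𝕜 R]
  [Fintype m] {k : WithTop ℕ∞}

lemma contDiff_matrix_mul [CompleteSpace 𝕜] [FiniteDimensional 𝕜 R] :
    ContDiff 𝕜 k fun x : Matrix m m R × Matrix m m R => x.1 * x.2 :=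
  (LinearMap.mul 𝕜 (Matrix m m R)).toContinuousBilinearMap.isBoundedBilinearMap.contDiff

lemma fderiv_matrix_mul_apply [CompleteSpace 𝕜] [FiniteDimensional 𝕜 R] {E : Type*}
    [NormedAddCommGroup E] [NormedSpace 𝕜 E] {f g : E → Matrix m m R} {x : E}
    (hf : DifferentiableAt 𝕜 f x) (hg : DifferentiableAt 𝕜 g x) (v : E) :
    fderiv 𝕜 (fun y => f y * g y) x v = fderiv 𝕜 f x v * g x + f x * fderiv 𝕜 g x v := by
  have h := ((LinearMap.mul 𝕜 (Matrix m m R)).toContinuousBilinearMap.hasFDerivAt_of_bilinear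
    hf.hasFDerivAt hg.hasFDerivAt).fderiv
  exact (DFunLike.congr_fun h v).trans (add_comm _ _)

lemma contDiff_matrix_apply (i j : m) : ContDiff 𝕜 k fun M : Matrix m m R => M i j :=
  contDiff_pi.1 (contDiff_pi.1 contDiff_id i) j

lemma contDiff_matrix_conjTranspose :
    ContDiff ℝ k (conjTranspose : Matrix m m ℂ → Matrix m m ℂ) :=
  (starL' ℝ : Matrix m m ℂ ≃L[ℝ] Matrix m m ℂ).contDiff

variable [DecidableEq m]

lemma contDiff_matrix_det : ContDiff 𝕜 k (det : Matrix m m R → R) := by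
  simp only [funext det_apply']
  exact ContDiff.sum fun σ _ =>
    contDiff_const.mul (contDiff_prod fun i _ => contDiff_matrix_apply (σ i) i)

lemma contDiff_matrix_adjugate : ContDiff 𝕜 k (adjugate : Matrix m m R → Matrix m m R) := by
  refine contDiff_pi.2 fun i => contDiff_pi.2 fun j => ?_
  simp only [adjugate_apply]
  refine contDiff_matrix_det.comp (contDiff_pi.2 fun r => contDiff_pi.2 fun s => ?_)
  simp only [updateRow_apply]
  split_ifs
  · exact contDiff_const
  · exact contDiff_matrix_apply _ _

lemma contDiffAt_matrix_inv {M : Matrix m m R} (hM : IsUnit M) :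
    ContDiffAt 𝕜 k (fun N : Matrix m m R => N⁻¹) M := by
  have hdet : M.det ≠ 0 := ((isUnit_iff_isUnit_det M).1 hM).ne_zero
  refine ((contDiff_matrix_det.contDiffAt.inv hdet).smul
    contDiff_matrix_adjugate.contDiffAt).congr_of_eventuallyEq (.of_forall fun N => ?_)
  simp only [Matrix.inv_def, Ring.inverse_eq_inv', Pi.smul_apply', Pi.inv_apply]

end MatrixCalculus

lemma contDiff_of_isSelfAdjoint_of_mul_eq {E m : Type*} [NormedAddCommGroup E]
    [NormedSpace ℝ E] [Fintype m] {k : WithTop ℕ∞} {e q : E → Matrix m m ℂ}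
    (he : ContDiff ℝ k e) (hq : ∀ x, IsSelfAdjoint (q x))
    (hqe : ∀ x, q x * e x = e x) (heq : ∀ x, e x * q x = q x) : ContDiff ℝ k q := by
  classical
  have hunit (x : E) : IsUnit (1 + (e x - (e x)ᴴ)) :=
    isUnit_one_add_of_conjTranspose_eq_neg (by simp)
  have hsum : ContDiff ℝ k fun x => 1 + (e x - (e x)ᴴ) :=
    contDiff_const.add (he.sub (contDiff_matrix_conjTranspose.comp he))
  have hinv : ContDiff ℝ k fun x => (1 + (e x - (e x)ᴴ))⁻¹ :=
    contDiff_iff_contDiffAt.2 fun x =>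
      (contDiffAt_matrix_inv (hunit x)).comp x hsum.contDiffAt
  rw [funext fun x => eq_mul_inv_one_add_sub_conjTranspose (hq x) (hqe x) (heq x)]
  exact contDiff_matrix_mul.comp (he.prodMk hinv)

section LaxDerivative

variable {E m : Type*} [NormedAddCommGroup E] [NormedSpace ℝ E]

/-- The first-order operator `L_τ = τ ∂_v - ∂_w` attached to a spectral parameter `τ` and two
directions `v`, `w`. Both equations of a Ward frame have the form `L_τ ψ = P ψ`. -/
def laxDeriv (τ : ℂ) (v w : E) (f : E → Matrix m m ℂ) (x : E) : Matrix m m ℂ :=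
  τ • fderiv ℝ f x v - fderiv ℝ f x w

variable {a τ : ℂ} {v w x : E} {f g : E → Matrix m m ℂ}

lemma laxDeriv_eq_add_smul (τ a : ℂ) :
    laxDeriv τ v w f x = laxDeriv a v w f x + (τ - a) • fderiv ℝ f x v := by
  simp only [laxDeriv, sub_smul]
  abel

lemma laxDeriv_const (M : Matrix m m ℂ) : laxDeriv τ v w (fun _ => M) x = 0 := by
  simp [laxDeriv]

lemma laxDeriv_conjTranspose [Finite m] :
    laxDeriv τ v w (fun y => (f y)ᴴ) x = (laxDeriv (conj τ) v w f x)ᴴ := by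
  have := Fintype.ofFinite m
  have h (u : E) : fderiv ℝ (fun y => (f y)ᴴ) x u = (fderiv ℝ f x u)ᴴ :=
    DFunLike.congr_fun (fderiv_star (𝕜 := ℝ) (f := f) (x := x)) u
  simp [laxDeriv, h]

lemma laxDeriv_one_add_smul_one_sub [Finite m] [DecidableEq m] (c : ℂ)
    (hf : DifferentiableAt ℝ f x) :
    laxDeriv τ v w (fun y => 1 + c • (1 - f y)) x = -(c • laxDeriv τ v w f x) := by
  have := Fintype.ofFinite m
  have h : HasFDerivAt (fun y => 1 + c • (1 - f y)) (c • -fderiv ℝ f x) x :=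
    ((hf.hasFDerivAt.const_sub 1).const_smul c).const_add 1
  have hD (u : E) : fderiv ℝ (fun y => 1 + c • (1 - f y)) x u = c • -fderiv ℝ f x u :=
    DFunLike.congr_fun h.fderiv u
  rw [laxDeriv, laxDeriv, hD, hD]
  simp only [smul_neg, smul_sub, smul_comm τ c]
  abel

variable [Fintype m]

lemma laxDeriv_mul (hf : DifferentiableAt ℝ f x) (hg : DifferentiableAt ℝ g x) :
    laxDeriv τ v w (fun y => f y * g y) x =
      laxDeriv τ v w f x * g x + f x * laxDeriv τ v w g x := by
  simp only [laxDeriv, fderiv_matrix_mul_apply hf hg, smul_add, sub_mul, mul_sub, smul_mul_assoc,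
    mul_smul_comm]
  abel

variable [DecidableEq m] {A B p q ψ : E → Matrix m m ℂ} {P : Matrix m m ℂ}

lemma conjTranspose_eq_neg_of_laxDeriv_eq_mul (hA : DifferentiableAt ℝ A x)
    (hB : DifferentiableAt ℝ B x) (hBA : ∀ y, (B y)ᴴ * A y = 1)
    (hLA : laxDeriv a v w A x = P * A x) (hLB : laxDeriv (conj a) v w B x = P * B x) :
    Pᴴ = -P := by
  have hAB : A x * (B x)ᴴ = 1 := mul_eq_one_comm.1 (hBA x)
  have hLBA := laxDeriv_mul (τ := a) (v := v) (w := w) hB.star hA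
  simp only [star_eq_conjTranspose, hBA, laxDeriv_const, laxDeriv_conjTranspose, hLA, hLB,
    conjTranspose_mul] at hLBA
  have hconj : A x * ((B x)ᴴ * Pᴴ * A x + (B x)ᴴ * (P * A x)) * (B x)ᴴ = Pᴴ + P :=
    calc _ = (A x * (B x)ᴴ) * (Pᴴ + P) * (A x * (B x)ᴴ) := by noncomm_ring
      _ = Pᴴ + P := by rw [hAB, one_mul, mul_one]
  rw [← hLBA, mul_zero, zero_mul] at hconj
  exact eq_neg_of_add_eq_zero_left hconj.symm

lemma laxDeriv_mul_one_sub_self (hq : DifferentiableAt ℝ q x) (hqq : ∀ y, IsIdempotentElem (q y)) :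
    laxDeriv τ v w q x * (1 - q x) = q x * laxDeriv τ v w q x := by
  have h := laxDeriv_mul (τ := τ) (v := v) (w := w) hq hq
  simp only [(hqq _).eq] at h
  rw [mul_sub, mul_one, sub_eq_iff_eq_add']
  exact h

lemma laxDeriv_mul_self_of_range_eq (hA : DifferentiableAt ℝ A x) (hp : DifferentiableAt ℝ p x)
    (hq : DifferentiableAt ℝ q x) (hLA : laxDeriv a v w A x = P * A x)
    (hLp : laxDeriv a v w p x * p x = 0) (hqAp : ∀ y, q y * (A y * p y) = A y * p y)
    {C : Matrix m m ℂ} (hAC : A x * C = 1) (hpCq : p x * (C * q x) = C * q x) :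
    laxDeriv a v w q x * q x = (1 - q x) * P * q x := by
  have hAp : DifferentiableAt ℝ (fun y => A y * p y) x :=
    (contDiff_matrix_mul.differentiable one_ne_zero _).comp x (hA.prodMk hp)
  have hL := laxDeriv_mul (τ := a) (v := v) (w := w) hq hAp
  simp only [hqAp, laxDeriv_mul hA hp, hLA] at hL
  have hApC : A x * p x * (C * q x) = q x := by rw [mul_assoc, hpCq, ← mul_assoc, hAC, one_mul]
  have hLpC : laxDeriv a v w p x * (C * q x) = 0 := by rw [← hpCq, ← mul_assoc, hLp, zero_mul]
  calc laxDeriv a v w q x * q x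
      = laxDeriv a v w q x * (A x * p x) * (C * q x) := by rw [mul_assoc, hApC]
    _ = (1 - q x) * (P * A x * p x + A x * laxDeriv a v w p x) * (C * q x) := by
        rw [eq_sub_of_add_eq hL.symm, sub_mul 1, one_mul]
    _ = (1 - q x) * (P * (A x * p x * (C * q x)) + A x * (laxDeriv a v w p x * (C * q x))) := by
        noncomm_ring
    _ = (1 - q x) * P * q x := by rw [hApC, hLpC, mul_zero, add_zero, mul_assoc]

lemma laxDeriv_eq_commutator_add (hq : DifferentiableAt ℝ q x) (hqq : ∀ y, IsStarProjection (q y))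
    (hP : Pᴴ = -P) (hLq : laxDeriv a v w q x * q x = (1 - q x) * P * q x) :
    laxDeriv a v w q x =
      P * q x - q x * P + (a - conj a) • (fderiv ℝ q x v * (1 - q x)) := by
  have hq' (y : E) : (q y)ᴴ = q y := (hqq y).isSelfAdjoint
  have hLq' : laxDeriv (conj a) v w q x * (1 - q x) = -(q x * P * (1 - q x)) := by
    have hstar : (laxDeriv a v w q x)ᴴ = laxDeriv (conj a) v w q x := by
      simpa only [hq', conj_conj] using
        (laxDeriv_conjTranspose (τ := conj a) (v := v) (w := w) (f := q) (x := x)).symm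
    have h := congrArg conjTranspose hLq
    simp only [conjTranspose_mul, conjTranspose_sub, conjTranspose_one, hstar, hq', hP] at h
    rw [laxDeriv_mul_one_sub_self hq fun y => (hqq y).isIdempotentElem, h]
    noncomm_ring
  calc laxDeriv a v w q x
      = laxDeriv a v w q x * q x + laxDeriv a v w q x * (1 - q x) := by noncomm_ring
    _ = laxDeriv a v w q x * q x + laxDeriv (conj a) v w q x * (1 - q x) +
          (a - conj a) • (fderiv ℝ q x v * (1 - q x)) := by
        nth_rewrite 2 [laxDeriv_eq_add_smul a (conj a)]
        rw [add_mul, smul_mul_assoc, add_assoc]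
    _ = P * q x - q x * P + (a - conj a) • (fderiv ℝ q x v * (1 - q x)) := by
        rw [hLq, hLq']
        noncomm_ring

lemma laxDeriv_one_add_smul_mul {c : ℂ} (hq : DifferentiableAt ℝ q x)
    (hψ : DifferentiableAt ℝ ψ x) (hc : c * (τ - a) = a - conj a)
    (hLψ : laxDeriv τ v w ψ x = P * ψ x)
    (hLq : laxDeriv a v w q x =
      P * q x - q x * P + (a - conj a) • (fderiv ℝ q x v * (1 - q x))) :
    laxDeriv τ v w (fun y => (1 + c • (1 - q y)) * ψ y) x =
      (P + (conj a - a) • fderiv ℝ q x v) * ((1 + c • (1 - q x)) * ψ x) := by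
  have hg : DifferentiableAt ℝ (fun y => 1 + c • (1 - q y)) x :=
    ((hq.const_sub 1).const_smul c).const_add 1
  have hgauge : -(c • laxDeriv τ v w q x) + (1 + c • (1 - q x)) * P =
      (P + (conj a - a) • fderiv ℝ q x v) * (1 + c • (1 - q x)) := by
    rw [laxDeriv_eq_add_smul τ a, hLq, smul_add c _ ((τ - a) • _), smul_smul, hc,
      ← neg_sub a (conj a)]
    simp only [mul_add, add_mul, mul_sub, sub_mul, smul_sub, smul_add, smul_mul_assoc,
      mul_smul_comm, neg_smul, smul_neg, neg_mul, mul_one, one_mul, smul_comm c (a - conj a)]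
    abel
  rw [laxDeriv_mul hg hψ, laxDeriv_one_add_smul_one_sub c hq, hLψ, ← mul_assoc, ← add_mul, hgauge,
    mul_assoc]

end LaxDerivative

section PartialDerivativesAsFDeriv

variable {W : Type*} [NormedAddCommGroup W] [NormedSpace ℝ W] {f : P3 → W} {p : P3}

lemma contDiff_pdy (hf : ContDiff ℝ (⊤ : ℕ∞) f) : ContDiff ℝ (⊤ : ℕ∞) (pdy f) := by
  have heq : pdy f = fun p => fderiv ℝ f p (0, 1, 0) :=
    funext fun p => pdy_eq_fderiv (hf.differentiable (by simp) p)
  rw [heq]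
  exact (hf.fderiv_right (by simp)).clm_apply contDiff_const

lemma contDiff_pdeta (hf : ContDiff ℝ (⊤ : ℕ∞) f) : ContDiff ℝ (⊤ : ℕ∞) (pdeta f) := by
  have heq : pdeta f = fun p => fderiv ℝ f p (-1, 0, 1) :=
    funext fun p => pdeta_eq_fderiv (hf.differentiable (by simp) p)
  rw [heq]
  exact (hf.fderiv_right (by simp)).clm_apply contDiff_const

lemma contDiff_apply_of_contDiffOn {U : Set ℂ} {F : P3 → ℂ → W} {τ : ℂ}
    (hF : ContDiffOn ℝ (⊤ : ℕ∞) (fun q : P3 × ℂ => F q.1 q.2) {q | q.2 ∈ U}) (hτ : τ ∈ U) :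
    ContDiff ℝ (⊤ : ℕ∞) fun p => F p τ :=
  contDiffOn_univ.1 <| hF.comp (contDiff_id.prodMk contDiff_const).contDiffOn fun _ _ => hτ

variable {n : ℕ} {g : P3 → Mat n} (τ : ℂ)

lemma laxDeriv_eq_smul_pdy_sub_pdxi (hg : DifferentiableAt ℝ g p) :
    laxDeriv τ (0, 1, 0) (1, 0, 1) g p = τ • pdy g p - pdxi g p := by
  rw [laxDeriv, pdy_eq_fderiv hg, pdxi_eq_fderiv hg]
  rfl

lemma laxDeriv_eq_smul_pdeta_sub_pdy (hg : DifferentiableAt ℝ g p) :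
    laxDeriv τ (-1, 0, 1) (0, 1, 0) g p = τ • pdeta g p - pdy g p := by
  rw [laxDeriv, pdy_eq_fderiv hg, pdeta_eq_fderiv hg]
  rfl

end PartialDerivativesAsFDeriv

/-- `ψ` is a Ward frame on the set `U` of spectral parameters, with coefficients `P` and `Q`.
The values of `ψ` outside `U` are irrelevant. -/
structure IsWardFrame {n : ℕ} (U : Set ℂ) (ψ : P3 → ℂ → Mat n) (P Q : P3 → Mat n) : Prop where
  contDiffOn : ContDiffOn ℝ (⊤ : ℕ∞) (fun q : P3 × ℂ => ψ q.1 q.2) {q | q.2 ∈ U}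
  differentiableOn : ∀ p, DifferentiableOn ℂ (ψ p) U
  isUnit : ∀ p, ∀ τ ∈ U, IsUnit (ψ p τ)
  contDiff_fst : ContDiff ℝ (⊤ : ℕ∞) P
  contDiff_snd : ContDiff ℝ (⊤ : ℕ∞) Q
  lax : ∀ τ ∈ U, ∀ p,
    τ • pdy (fun r => ψ r τ) p - pdxi (fun r => ψ r τ) p = P p * ψ p τ ∧
    τ • pdeta (fun r => ψ r τ) p - pdy (fun r => ψ r τ) p = Q p * ψ p τ
  reality : ∀ τ ∈ U, conj τ ∈ U → ∀ p, (ψ p (conj τ))ᴴ * ψ p τ = 1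

/-- `Pr` is a smooth Hermitian-projection-valued solution of the 1-soliton equations with
pole `a`. -/
structure IsOneSoliton {n : ℕ} (a : ℂ) (Pr : P3 → Mat n) : Prop where
  contDiff : ContDiff ℝ (⊤ : ℕ∞) Pr
  isStarProjection : ∀ p, IsStarProjection (Pr p)
  eqs : ∀ p, (a • pdy Pr p - pdxi Pr p) * Pr p = 0 ∧ (a • pdeta Pr p - pdy Pr p) * Pr p = 0

/-- `Prt` is the dressing of `Pr` by `ψ` at `a`: the family of Hermitian projections onto
`ψ(·, a)(range Pr)`, written `π̃` in the paper. -/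
structure IsDressedProjection {n : ℕ} (a : ℂ) (ψ : P3 → ℂ → Mat n) (Pr Prt : P3 → Mat n) :
    Prop where
  isStarProjection : ∀ p, IsStarProjection (Prt p)
  range_eq : ∀ p, LinearMap.range (Prt p).mulVecLin =
    (LinearMap.range (Pr p).mulVecLin).map (ψ p a).mulVecLin

section Backlund

open scoped Topology

variable {n : ℕ} {U : Set ℂ} {a τ : ℂ} {ψ : P3 → ℂ → Mat n} {P Q Pr Prt : P3 → Mat n}

lemma IsWardFrame.contDiff_apply (hψ : IsWardFrame U ψ P Q) (hτ : τ ∈ U) :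
    ContDiff ℝ (⊤ : ℕ∞) fun p => ψ p τ :=
  contDiff_apply_of_contDiffOn hψ.contDiffOn hτ

lemma IsWardFrame.differentiable_apply (hψ : IsWardFrame U ψ P Q) (hτ : τ ∈ U) :
    Differentiable ℝ fun p => ψ p τ :=
  (hψ.contDiff_apply hτ).differentiable (by simp)

lemma IsWardFrame.laxDeriv_fst (hψ : IsWardFrame U ψ P Q) (hτ : τ ∈ U) (p : P3) :
    laxDeriv τ (0, 1, 0) (1, 0, 1) (fun r => ψ r τ) p = P p * ψ p τ := by
  rw [laxDeriv_eq_smul_pdy_sub_pdxi τ (hψ.differentiable_apply hτ p), (hψ.lax τ hτ p).1]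

lemma IsWardFrame.laxDeriv_snd (hψ : IsWardFrame U ψ P Q) (hτ : τ ∈ U) (p : P3) :
    laxDeriv τ (-1, 0, 1) (0, 1, 0) (fun r => ψ r τ) p = Q p * ψ p τ := by
  rw [laxDeriv_eq_smul_pdeta_sub_pdy τ (hψ.differentiable_apply hτ p), (hψ.lax τ hτ p).2]

lemma IsOneSoliton.differentiable (hPr : IsOneSoliton a Pr) : Differentiable ℝ Pr :=
  hPr.contDiff.differentiable (by simp)

lemma IsDressedProjection.mul_mul_eq (hPrt : IsDressedProjection a ψ Pr Prt) (p : P3) :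
    Prt p * (ψ p a * Pr p) = ψ p a * Pr p :=
  mul_mul_eq_of_range_eq_map (hPrt.isStarProjection p).isIdempotentElem (hPrt.range_eq p)

lemma IsDressedProjection.mul_conjTranspose_mul_eq (hPrt : IsDressedProjection a ψ Pr Prt)
    {p : P3} (hPr : IsIdempotentElem (Pr p)) (hreal : (ψ p (conj a))ᴴ * ψ p a = 1) :
    Pr p * ((ψ p (conj a))ᴴ * Prt p) = (ψ p (conj a))ᴴ * Prt p :=
  mul_mul_eq_of_range_eq_map hPr (range_eq_map_of_mul_eq_one hreal (hPrt.range_eq p))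

lemma IsDressedProjection.contDiff (hPrt : IsDressedProjection a ψ Pr Prt)
    (hPr : ContDiff ℝ (⊤ : ℕ∞) Pr) (hPri : ∀ p, IsIdempotentElem (Pr p))
    (hψ : IsWardFrame U ψ P Q) (ha : a ∈ U) (hac : conj a ∈ U) :
    ContDiff ℝ (⊤ : ℕ∞) Prt := by
  have hreal := hψ.reality a ha hac
  have hAp : ContDiff ℝ (⊤ : ℕ∞) fun p => ψ p a * Pr p :=
    contDiff_matrix_mul.comp ((hψ.contDiff_apply ha).prodMk hPr)
  -- `ψ(a) π ψ(ā)ᴴ = ψ(a) π ψ(a)⁻¹` is an oblique projection onto the range of `π̃`.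
  refine contDiff_of_isSelfAdjoint_of_mul_eq (e := fun p => ψ p a * Pr p * (ψ p (conj a))ᴴ)
    (contDiff_matrix_mul.comp
      (hAp.prodMk (contDiff_matrix_conjTranspose.comp (hψ.contDiff_apply hac))))
    (fun p => (hPrt.isStarProjection p).isSelfAdjoint) (fun p => ?_) fun p => ?_
  · rw [← mul_assoc, hPrt.mul_mul_eq]
  · rw [mul_assoc, mul_assoc, hPrt.mul_conjTranspose_mul_eq (hPri p) (hreal p), ← mul_assoc,
      mul_eq_one_comm.1 (hreal p), one_mul]

/-- The extension of `g_{a,π̃} ψ g_{a,π}⁻¹` across its poles `a` and `conj a`, where the residues of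
the partial fraction expansion `solg_mul_mul_solginv` vanish: `dslope` replaces the quotients
`f τ / (τ - c)` with `f c = 0`. -/
def backlundExtension (a : ℂ) (ψ : P3 → ℂ → Mat n) (Pr Prt : P3 → Mat n) (p : P3) (τ : ℂ) :
    Mat n :=
  ψ p τ + (a - conj a) • dslope (fun s => (1 - Prt p) * ψ p s * Pr p) a τ +
    (conj a - a) • dslope (fun s => Prt p * ψ p s * (1 - Pr p)) (conj a) τ

lemma backlundExtension_eq (hPrt : IsDressedProjection a ψ Pr Prt) {p : P3}
    (hPr : IsStarProjection (Pr p)) (hreal : (ψ p (conj a))ᴴ * ψ p a = 1) (hτa : τ ≠ a)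
    (hτac : τ ≠ conj a) :
    backlundExtension a ψ Pr Prt p τ = solg a Prt p τ * ψ p τ * solginv a Pr p τ := by
  have res_a : (1 - Prt p) * ψ p a * Pr p = 0 := by
    rw [mul_assoc, sub_mul, one_mul, hPrt.mul_mul_eq, sub_self]
  have res_conj : Prt p * ψ p (conj a) * (1 - Pr p) = 0 :=
    mul_mul_one_sub_eq_zero_of_range_eq_map hreal hPr
      (hPrt.isStarProjection p).isSelfAdjoint (hPrt.range_eq p)
  rw [solg_mul_mul_solginv Prt Pr _ hτa hτac, backlundExtension, dslope_of_ne _ hτa,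
    dslope_of_ne _ hτac, slope_def_module, slope_def_module, res_a, res_conj]
  simp only [sub_zero, smul_smul, div_eq_mul_inv]

lemma differentiableOn_backlundExtension (hU : IsOpen U) (ha : a ∈ U) (hac : conj a ∈ U) {p : P3}
    (hψ : DifferentiableOn ℂ (ψ p) U) :
    DifferentiableOn ℂ (backlundExtension a ψ Pr Prt p) U := by
  have hmul (M N : Mat n) : DifferentiableOn ℂ (fun s => M * ψ p s * N) U :=
    (LinearMap.mulLeftRight ℂ (M, N)).toContinuousLinearMap.differentiable.comp_differentiableOn hψ
  have hdslope {c : ℂ} (hc : c ∈ U) (M N : Mat n) :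
      DifferentiableOn ℂ (dslope (fun s => M * ψ p s * N) c) U :=
    (Complex.differentiableOn_dslope (hU.mem_nhds hc)).2 (hmul M N)
  exact (hψ.add ((hdslope ha _ _).const_smul (a - conj a))).add
    ((hdslope hac _ _).const_smul (conj a - a))

lemma conjTranspose_backlundExtension_conj_mul_self_of_ne
    (hPrt : IsDressedProjection a ψ Pr Prt) {p : P3} (hPr : IsStarProjection (Pr p))
    (hreal : (ψ p (conj a))ᴴ * ψ p a = 1) (hrealτ : (ψ p (conj τ))ᴴ * ψ p τ = 1)
    (hτa : τ ≠ a) (hτac : τ ≠ conj a) :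
    (backlundExtension a ψ Pr Prt p (conj τ))ᴴ * backlundExtension a ψ Pr Prt p τ = 1 := by
  have hτa' : conj τ ≠ conj a := (starRingEnd ℂ).injective.ne hτa
  have hτac' : conj τ ≠ a := fun h => hτac (by rw [← h, conj_conj])
  rw [backlundExtension_eq hPrt hPr hreal hτa hτac, backlundExtension_eq hPrt hPr hreal hτac' hτa',
    conjTranspose_mul, mul_assoc, ← mul_assoc _ (solg a Prt p τ * ψ p τ),
    conjTranspose_solg_mul_conj_mul_self hrealτ (hPrt.isStarProjection p) hτa hτac, one_mul,
    conjTranspose_solginv_conj hPr.isSelfAdjoint, solg_mul_solginv hPr.isIdempotentElem hτa hτac]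

lemma conjTranspose_backlundExtension_conj_mul_self (hU : IsOpen U)
    (hPrt : IsDressedProjection a ψ Pr Prt) {p : P3} (hPr : IsStarProjection (Pr p))
    (hψ : IsWardFrame U ψ P Q) (ha : a ∈ U) (hac : conj a ∈ U) (hτ : τ ∈ U) (hτc : conj τ ∈ U) :
    (backlundExtension a ψ Pr Prt p (conj τ))ᴴ * backlundExtension a ψ Pr Prt p τ = 1 := by
  set Ψ := backlundExtension a ψ Pr Prt p
  have hcont {s : ℂ} (hs : s ∈ U) : ContinuousAt Ψ s :=
    (differentiableOn_backlundExtension hU ha hac (hψ.differentiableOn p)).continuousOn.continuousAt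
      (hU.mem_nhds hs)
  have hprod : ContinuousAt (fun s => (Ψ (conj s))ᴴ * Ψ s) τ := by
    have hconj : ContinuousAt (fun s => Ψ (conj s)) τ :=
      ContinuousAt.comp (f := conj) (hcont hτc) continuous_conj.continuousAt
    exact (continuous_id.matrix_conjTranspose.continuousAt.comp hconj).mul (hcont hτ)
  have hne (c : ℂ) : ∀ᶠ s in 𝓝[≠] τ, s ≠ c := by
    rcases eq_or_ne τ c with rfl | h
    · exact self_mem_nhdsWithin
    · exact eventually_nhdsWithin_of_eventually_nhds (eventually_ne_nhds h)
  have hdom : ∀ᶠ s in 𝓝[≠] τ, s ∈ U ∧ conj s ∈ U := eventually_nhdsWithin_of_eventually_nhds <|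
    (hU.eventually_mem hτ).and (continuous_conj.continuousAt.eventually (hU.eventually_mem hτc))
  have hEq : (fun s => (Ψ (conj s))ᴴ * Ψ s) =ᶠ[𝓝[≠] τ] fun _ => 1 := by
    filter_upwards [hne a, hne (conj a), hdom] with s hsa hsac hs
    exact conjTranspose_backlundExtension_conj_mul_self_of_ne hPrt hPr (hψ.reality a ha hac p)
      (hψ.reality s hs.1 hs.2 p) hsa hsac
  exact ((hprod.eventuallyEq_nhds_iff_eventuallyEq_nhdsNE continuousAt_const).1 hEq).eq_of_nhds

lemma isUnit_backlundExtension (hU : IsOpen U) (hPrt : IsDressedProjection a ψ Pr Prt) {p : P3}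
    (hPr : IsStarProjection (Pr p)) (hψ : IsWardFrame U ψ P Q) (ha : a ∈ U) (hac : conj a ∈ U)
    (hτ : τ ∈ U) (hτc : conj τ ∈ U) : IsUnit (backlundExtension a ψ Pr Prt p τ) :=
  .of_mul_eq_one_right _
    (conjTranspose_backlundExtension_conj_mul_self hU hPrt hPr hψ ha hac hτ hτc)

lemma IsDressedProjection.laxDeriv_solg_mul (hPrt : IsDressedProjection a ψ Pr Prt)
    (hPr : IsOneSoliton a Pr) (hψ : IsWardFrame U ψ P Q) (ha : a ∈ U) (hac : conj a ∈ U)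
    {v w p : P3} {C : Mat n}
    (hLψ : ∀ s ∈ U, laxDeriv s v w (fun r => ψ r s) p = C * ψ p s)
    (hLPr : laxDeriv a v w Pr p * Pr p = 0) (hτ : τ ∈ U) (hτa : τ ≠ a) :
    laxDeriv τ v w (fun r => solg a Prt r τ * ψ r τ) p =
      (C + (conj a - a) • fderiv ℝ Prt p v) * (solg a Prt p τ * ψ p τ) := by
  have hreal := hψ.reality a ha hac
  have hdψ {s : ℂ} (hs : s ∈ U) := hψ.differentiable_apply hs p
  have hPri (r : P3) := (hPr.isStarProjection r).isIdempotentElem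
  have hdPrt : DifferentiableAt ℝ Prt p :=
    (hPrt.contDiff hPr.contDiff hPri hψ ha hac).differentiable (by simp) p
  have hC : Cᴴ = -C := conjTranspose_eq_neg_of_laxDeriv_eq_mul (hdψ ha) (hdψ hac) hreal
    (hLψ a ha) (hLψ _ hac)
  have hLPrt : laxDeriv a v w Prt p * Prt p = (1 - Prt p) * C * Prt p :=
    laxDeriv_mul_self_of_range_eq (hdψ ha) (hPr.differentiable p) hdPrt (hLψ a ha) hLPr
      hPrt.mul_mul_eq (mul_eq_one_comm.1 (hreal p))
      (hPrt.mul_conjTranspose_mul_eq (hPri p) (hreal p))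
  exact laxDeriv_one_add_smul_mul hdPrt (hdψ hτ) (div_mul_cancel₀ _ (sub_ne_zero.2 hτa))
    (hLψ τ hτ) (laxDeriv_eq_commutator_add hdPrt hPrt.isStarProjection hC hLPrt)

lemma IsWardFrame.contDiffOn_solg_mul (hψ : IsWardFrame U ψ P Q)
    (hPrt : ContDiff ℝ (⊤ : ℕ∞) Prt) :
    ContDiffOn ℝ (⊤ : ℕ∞) (fun q : P3 × ℂ => solg a Prt q.1 q.2 * ψ q.1 q.2)
      {q | q.2 ∈ U \ {a, conj a}} :=
  contDiff_matrix_mul.comp_contDiffOn <|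
    ((contDiffOn_solg a hPrt).mono fun _ hq => fun h => hq.2 (.inl h)).prodMk
      (hψ.contDiffOn.mono fun _ hq => hq.1)

lemma IsWardFrame.solg_mul (hψ : IsWardFrame U ψ P Q) (hPr : IsOneSoliton a Pr)
    (hPrt : IsDressedProjection a ψ Pr Prt) (ha : a ∈ U) (hac : conj a ∈ U) :
    IsWardFrame (U \ {a, conj a}) (fun p τ => solg a Prt p τ * ψ p τ)
      (fun p => P p + (conj a - a) • pdy Prt p) (fun p => Q p + (conj a - a) • pdeta Prt p) := by
  have hPrts : ContDiff ℝ (⊤ : ℕ∞) Prt :=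
    hPrt.contDiff hPr.contDiff (fun p => (hPr.isStarProjection p).isIdempotentElem) hψ ha hac
  have hψ₁ := hψ.contDiffOn_solg_mul (a := a) hPrts
  have ne_of_mem {τ : ℂ} (hτ : τ ∈ U \ {a, conj a}) : τ ≠ a ∧ τ ≠ conj a := not_or.1 hτ.2
  refine ⟨hψ₁, fun p τ hτ => ?_, fun p τ hτ => ?_, ?_, ?_, fun τ hτ p => ?_, fun τ hτ hτc p => ?_⟩
  · have hg := differentiableAt_solg (Pr := Prt) (ne_of_mem hτ).1 p
    exact (contDiff_matrix_mul.differentiable one_ne_zero _).comp_differentiableWithinAt τ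
      (hg.differentiableWithinAt.prodMk ((hψ.differentiableOn p).mono Set.sdiff_subset τ hτ))
  · exact (isUnit_solg (hPrt.isStarProjection p).isIdempotentElem (ne_of_mem hτ).1
      (ne_of_mem hτ).2).mul (hψ.isUnit p τ hτ.1)
  · exact hψ.contDiff_fst.add ((contDiff_pdy hPrts).const_smul _)
  · exact hψ.contDiff_snd.add ((contDiff_pdeta hPrts).const_smul _)
  · have hdψ₁ := (contDiff_apply_of_contDiffOn
      (F := fun r s => solg a Prt r s * ψ r s) hψ₁ hτ).differentiable (by simp) p
    have hdPrt := hPrts.differentiable (by simp) p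
    have hdPr := hPr.differentiable p
    rw [← laxDeriv_eq_smul_pdy_sub_pdxi τ hdψ₁, ← laxDeriv_eq_smul_pdeta_sub_pdy τ hdψ₁,
      pdy_eq_fderiv hdPrt, pdeta_eq_fderiv hdPrt]
    exact ⟨hPrt.laxDeriv_solg_mul hPr hψ ha hac (fun s hs => hψ.laxDeriv_fst hs p)
        (by rw [laxDeriv_eq_smul_pdy_sub_pdxi a hdPr, (hPr.eqs p).1]) hτ.1 (ne_of_mem hτ).1,
      hPrt.laxDeriv_solg_mul hPr hψ ha hac (fun s hs => hψ.laxDeriv_snd hs p)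
        (by rw [laxDeriv_eq_smul_pdeta_sub_pdy a hdPr, (hPr.eqs p).2]) hτ.1 (ne_of_mem hτ).1⟩
  · exact conjTranspose_solg_mul_conj_mul_self (hψ.reality τ hτ.1 hτc.1 p)
      (hPrt.isStarProjection p) (ne_of_mem hτ).1 (ne_of_mem hτ).2

end Backlund

theorem algebraic_backlund_transformation_general {n : ℕ} {S : Set ℂ} (hS : IsClosed S)
    (hSc : ∀ z ∈ S, conj z ∈ S) {a : ℂ} (ha : a ∉ S) {ψ : P3 → ℂ → Mat n}
    {P Q Pr Prt : P3 → Mat n} (hψ : IsWardFrame Sᶜ ψ P Q) (hPr : IsOneSoliton a Pr)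
    (hPrt : IsDressedProjection a ψ Pr Prt) :
    ContDiff ℝ (⊤ : ℕ∞) Prt ∧
    (∃ Ψ : P3 → ℂ → Mat n,
      (∀ (p : P3) (τ : ℂ), τ ∉ S → τ ≠ a → τ ≠ conj a →
        Ψ p τ = solg a Prt p τ * ψ p τ * solginv a Pr p τ) ∧
      ∀ (p : P3) (τ : ℂ), τ ∉ S → DifferentiableAt ℂ (Ψ p) τ ∧ IsUnit (Ψ p τ)) ∧
    IsWardFrame (Sᶜ \ {a, conj a}) (fun p τ => solg a Prt p τ * ψ p τ)
      (fun p => P p + (conj a - a) • pdy Prt p) (fun p => Q p + (conj a - a) • pdeta Prt p) := by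
  have hconj (z : ℂ) (hz : z ∉ S) : conj z ∉ S := fun h => hz (conj_conj z ▸ hSc _ h)
  have hac : conj a ∉ S := hconj a ha
  have hU : IsOpen Sᶜ := hS.isOpen_compl
  have hPrp := hPr.isStarProjection
  exact ⟨hPrt.contDiff hPr.contDiff (fun p => (hPrp p).isIdempotentElem) hψ ha hac,
    ⟨backlundExtension a ψ Pr Prt,
      fun p _ _ => backlundExtension_eq hPrt (hPrp p) (hψ.reality a ha hac p),
      fun p τ hτ =>
        ⟨(differentiableOn_backlundExtension hU ha hac (hψ.differentiableOn p)).differentiableAt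
          (hU.mem_nhds hτ),
        isUnit_backlundExtension hU hPrt (hPrp p) hψ ha hac hτ (hconj τ hτ)⟩⟩,
    hψ.solg_mul hPr hPrt ha hac⟩

/-- **Algebraic Bäcklund transformation.**
Given a Ward frame `ψ` on `ℂ∖Σ` with coefficients `P`, `Q`, a 1-soliton projection `π`
with pole `α`, and `π̃` the Hermitian projection onto `ψ(·,α)(range π)`:
(0) `π̃` is smooth; (1) `ψ̃ = g_{α,π̃}·ψ·g_{α,π}⁻¹` extends holomorphically and invertibly
to `τ = α, ᾱ`; (2) `ψ₁ = g_{α,π̃}·ψ` is again a Ward frame, with coefficients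
`P + (ᾱ−α)∂_yπ̃` and `Q + (ᾱ−α)∂_ηπ̃`. -/
theorem algebraic_backlund_transformation {n : ℕ} (Sg : Finset ℂ)
    (hSgc : ∀ z ∈ Sg, conj z ∈ Sg)
    (a : ℂ) (ha : a.im ≠ 0) (haSg : a ∉ Sg) (hacSg : conj a ∉ Sg)
    (ψ : P3 → ℂ → Mat n)
    (hψs : ContDiffOn ℝ (⊤ : ℕ∞) (fun q : P3 × ℂ => ψ q.1 q.2) {q : P3 × ℂ | q.2 ∉ Sg})
    (hψhol : ∀ (p : P3) (τ : ℂ), τ ∉ Sg → DifferentiableAt ℂ (ψ p) τ)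
    (hψgl : ∀ (p : P3) (τ : ℂ), τ ∉ Sg → IsUnit (ψ p τ))
    (P Q : P3 → Mat n) (hPs : ContDiff ℝ (⊤ : ℕ∞) P) (hQs : ContDiff ℝ (⊤ : ℕ∞) Q)
    (heq : ∀ τ : ℂ, τ ∉ Sg → ∀ p : P3,
      τ • pdy (fun r => ψ r τ) p - pdxi (fun r => ψ r τ) p = P p * ψ p τ ∧
      τ • pdeta (fun r => ψ r τ) p - pdy (fun r => ψ r τ) p = Q p * ψ p τ)
    (hreal : ∀ τ : ℂ, τ ∉ Sg → ∀ p : P3, (ψ p (conj τ))ᴴ * ψ p τ = 1)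
    (Pr : P3 → Mat n) (hPrs : ContDiff ℝ (⊤ : ℕ∞) Pr)
    (hherm : ∀ p : P3, (Pr p)ᴴ = Pr p) (hidem : ∀ p : P3, Pr p * Pr p = Pr p)
    (hsol : ∀ p : P3, (a • pdy Pr p - pdxi Pr p) * Pr p = 0 ∧
      (a • pdeta Pr p - pdy Pr p) * Pr p = 0)
    (Prt : P3 → Mat n)
    (hPrtherm : ∀ p : P3, (Prt p)ᴴ = Prt p) (hPrtidem : ∀ p : P3, Prt p * Prt p = Prt p)
    (hPrtrange : ∀ p : P3, LinearMap.range (Matrix.mulVecLin (Prt p)) =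
      Submodule.map (Matrix.mulVecLin (ψ p a)) (LinearMap.range (Matrix.mulVecLin (Pr p)))) :
    ContDiff ℝ (⊤ : ℕ∞) Prt ∧
    (∃ Ψ : P3 → ℂ → Mat n,
      (∀ (p : P3) (τ : ℂ), τ ∉ Sg → τ ≠ a → τ ≠ conj a →
        Ψ p τ = solg a Prt p τ * ψ p τ * solginv a Pr p τ) ∧
      (∀ p : P3, DifferentiableAt ℂ (Ψ p) a ∧ DifferentiableAt ℂ (Ψ p) (conj a) ∧
        IsUnit (Ψ p a) ∧ IsUnit (Ψ p (conj a)))) ∧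
    (∀ τ : ℂ, τ ∉ Sg → τ ≠ a → τ ≠ conj a → ∀ p : P3,
      (solg a Prt p (conj τ) * ψ p (conj τ))ᴴ * (solg a Prt p τ * ψ p τ) = 1 ∧
      τ • pdy (fun r => solg a Prt r τ * ψ r τ) p -
          pdxi (fun r => solg a Prt r τ * ψ r τ) p =
        (P p + (conj a - a) • pdy Prt p) * (solg a Prt p τ * ψ p τ) ∧
      τ • pdeta (fun r => solg a Prt r τ * ψ r τ) p -
          pdy (fun r => solg a Prt r τ * ψ r τ) p =
        (Q p + (conj a - a) • pdeta Prt p) * (solg a Prt p τ * ψ p τ)) := by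
  obtain ⟨hPrts, ⟨Ψ, hΨ, hΨ_reg⟩, hψ₁⟩ :=
    algebraic_backlund_transformation_general Sg.finite_toSet.isClosed hSgc haSg
      ⟨hψs, fun p τ hτ => (hψhol p τ hτ).differentiableWithinAt, hψgl, hPs, hQs, heq,
        fun τ hτ _ => hreal τ hτ⟩
      ⟨hPrs, fun p => ⟨hidem p, hherm p⟩, hsol⟩ ⟨fun p => ⟨hPrtidem p, hPrtherm p⟩, hPrtrange⟩
  exact ⟨hPrts, ⟨Ψ, hΨ, fun p => ⟨(hΨ_reg p a haSg).1, (hΨ_reg p _ hacSg).1,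
    (hΨ_reg p a haSg).2, (hΨ_reg p _ hacSg).2⟩⟩, fun τ hτ hτa hτac p =>
    ⟨conjTranspose_solg_mul_conj_mul_self (hreal τ hτ p) ⟨hPrtidem p, hPrtherm p⟩ hτa hτac,
      hψ₁.lax τ ⟨hτ, not_or.2 ⟨hτa, hτac⟩⟩ p⟩⟩
end
end
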